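/- Assume: (O1) a_{ij}(ω) ≥ 0 for all i ≠ j and all ω; (O2) ω ↦ max_{i,j} a_{ij}(ω) ∈ L₁(ℙ); and the focusing conditions: there exist e, e* ∈ X⁺ with ‖e‖ = ‖e*‖ = 1 and measurable κ, κ* : Ω → [1, ∞) with ln⁺ln κ and ln⁺ln κ* in L₁(ℙ) such that for every ω ∈ Ω and every u ∈ X⁺ ∖ {0} there are β(ω,u) > 0 and β*(ω,u) > 0 with β(ω,u)·e ≤ U_ω(1)u ≤ κ(ω)β(ω,u)·e and β*(ω,u)·e* ≤ (U_{θ_{−1}ω}(1))ᵀ u ≤ κ*(ω)β*(ω,u)·e* componentwise. Then there exist a (θ_t)-invariant set Ω̃₁ ∈ 𝔉 with ℙ(Ω̃₁) = 1 and a measurable map w : Ω̃₁ → X⁺ ∖ {0} with ‖w(ω)‖ = 1 such that: (i) U_ω(t)w(ω) = ‖U_ω(t)w(ω)‖·w(θ_t ω) for all ω ∈ Ω̃₁ and t ≥ 0; (ii) the generalized principal Lyapunov exponent satisfies λ̃₁ = ∫_Ω ⟨A(ω)w(ω), w(ω)⟩ dℙ(ω) ∈ [−∞, ∞), that is, lim_{t→∞}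 (1/t) ln‖U_ω(t)w(ω)‖ = ∫_Ω w(ω)ᵀA(ω)w(ω) dℙ(ω) for every ω ∈ Ω̃₁; (iii) limsup_{t→∞} (1/t) ln‖U_ω(t)u‖ ≤ λ̃₁ for every ω ∈ Ω̃₁ and every u ∈ ℝᴺ ∖ {0}. -/

import Mathlib

open MeasureTheory Matrix Filter

/-- `ln⁺ x = max (ln x) 0` (with `Real.log 0 = 0`, so `ln⁺ 0 = 0`). -/
noncomputable def lnplus (x : ℝ) : ℝ := max (Real.log x) 0

/-- The Euclidean norm on `Fin N → ℝ`. -/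
noncomputable def enorm' {N : ℕ} (u : Fin N → ℝ) : ℝ := Real.sqrt (∑ i, (u i) ^ 2)

/-- The operator norm of a matrix with respect to the Euclidean norm. -/
noncomputable def eopNorm {N : ℕ} (M : Matrix (Fin N) (Fin N) ℝ) : ℝ :=
  sSup {c : ℝ | ∃ u : Fin N → ℝ, enorm' u ≤ 1 ∧ c = enorm' (M.mulVec u)}

/-- The first function is a primitive of the second, locally integrable one. -/
structure Prim (φ φ' : ℝ → ℝ) : Prop where
  int : ∀ a b, IntervalIntegrable φ' volume a b
  eq : ∀ t, φ t = φ 0 + ∫ s in (0:ℝ)..t, φ' s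

theorem Prim.sub_eq {φ φ' : ℝ → ℝ} (h : Prim φ φ') (a b : ℝ) :
    φ b - φ a = ∫ s in a..b, φ' s := by
  rw [h.eq b, h.eq a, ← intervalIntegral.integral_interval_sub_left (h.int 0 b) (h.int 0 a)]
  ring

theorem Prim.ac {φ φ' : ℝ → ℝ} (h : Prim φ φ') (a b : ℝ) :
    AbsolutelyContinuousOnInterval φ a b := by
  have h1 := (h.int a b).absolutelyContinuousOnInterval_intervalIntegral (c := a) (by simp)
  have h2 : AbsolutelyContinuousOnInterval (fun _ : ℝ => φ a) a b :=
    ((LipschitzWith.const (φ a)).lipschitzOnWith (s := Set.uIcc a b)).absolutelyContinuousOnInterval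
  have h3 := h2.add h1
  have : φ = (fun _ : ℝ => φ a) + fun x => ∫ v in a..x, φ' v := by
    funext x
    simp only [Pi.add_apply]
    rw [← h.sub_eq a x]; ring
  rw [this]; exact h3

theorem locInt_of {f : ℝ → ℝ} (h : ∀ a b, IntervalIntegrable f volume a b) :
    LocallyIntegrable f volume := by
  intro x
  refine ⟨Set.Icc (x-1) (x+1), Icc_mem_nhds (by linarith) (by linarith), ?_⟩
  exact (intervalIntegrable_iff_integrableOn_Icc_of_le (by linarith)).1 (h (x-1) (x+1))

theorem Prim.ae {φ φ' : ℝ → ℝ} (h : Prim φ φ') : ∀ᵐ t, HasDerivAt φ (φ' t) t := by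
  filter_upwards [LocallyIntegrable.ae_hasDerivAt_integral (locInt_of h.int)] with t ht
  have h1 := (ht 0).const_add (φ 0)
  have : φ = fun x => φ 0 + ∫ v in (0:ℝ)..x, φ' v := by
    funext x; exact h.eq x
  rw [this]; exact h1

theorem Prim.of_ac {φ φ' : ℝ → ℝ} (h : ∀ a b, AbsolutelyContinuousOnInterval φ a b)
    (hd : ∀ᵐ t, HasDerivAt φ (φ' t) t) : Prim φ φ' := by
  have hae : deriv φ =ᵐ[volume] φ' := by
    filter_upwards [hd] with t ht using ht.deriv
  constructor
  · intro a b
    exact (h a b).intervalIntegrable_deriv.congr_ae (ae_restrict_of_ae hae)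
  · intro t
    have := (h 0 t).integral_deriv_eq_sub
    rw [← intervalIntegral.integral_congr_ae (f := deriv φ) (g := φ')
      (by filter_upwards [hae] with x hx _ using hx), this]
    ring

theorem Prim.continuous {φ φ' : ℝ → ℝ} (h : Prim φ φ') : Continuous φ := by
  have : φ = fun x => φ 0 + ∫ v in (0:ℝ)..x, φ' v := by
    funext x; exact h.eq x
  rw [this]
  exact continuous_const.add (intervalIntegral.continuous_primitive h.int 0)

theorem Prim.mul {φ φ' ψ ψ' : ℝ → ℝ} (h : Prim φ φ') (g : Prim ψ ψ') :
    Prim (fun t => φ t * ψ t) (fun t => φ' t * ψ t + φ t * ψ' t) := by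
  refine Prim.of_ac (fun a b => (h.ac a b).fun_mul (g.ac a b)) ?_
  filter_upwards [h.ae, g.ae] with t h1 h2 using h1.mul h2

theorem Prim.add {φ φ' ψ ψ' : ℝ → ℝ} (h : Prim φ φ') (g : Prim ψ ψ') :
    Prim (fun t => φ t + ψ t) (fun t => φ' t + ψ' t) := by
  refine Prim.of_ac (fun a b => (h.ac a b).fun_add (g.ac a b)) ?_
  filter_upwards [h.ae, g.ae] with t h1 h2 using h1.add h2

theorem Prim.const (c : ℝ) : Prim (fun _ => c) (fun _ => 0) :=
  ⟨fun _ _ => intervalIntegrable_const, fun t => by simp⟩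

theorem Prim.const_mul {φ φ' : ℝ → ℝ} (c : ℝ) (h : Prim φ φ') :
    Prim (fun t => c * φ t) (fun t => c * φ' t) := by
  have := (Prim.const c).mul h
  simpa using this

theorem Prim.sum {ι : Type*} (s : Finset ι) {φ φ' : ι → ℝ → ℝ} (h : ∀ i, Prim (φ i) (φ' i)) :
    Prim (fun t => ∑ i ∈ s, φ i t) (fun t => ∑ i ∈ s, φ' i t) := by
  classical
  induction s using Finset.induction_on with
  | empty => simpa using Prim.const 0
  | insert a s ha ih =>
    simp only [Finset.sum_insert ha]
    exact (h a).add ih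

theorem Prim.exp {φ φ' : ℝ → ℝ} (h : Prim φ φ') :
    Prim (fun t => Real.exp (φ t)) (fun t => φ' t * Real.exp (φ t)) := by
  refine Prim.of_ac (fun a b => ?_) ?_
  · obtain ⟨C, hC⟩ := (h.ac a b).exists_bound
    have hlip : ∀ x ∈ Set.uIcc a b, ∀ y ∈ Set.uIcc a b,
        dist (Real.exp (φ x)) (Real.exp (φ y)) ≤ Real.exp C * dist (φ x) (φ y) := by
      intro x hx y hy
      have := Convex.norm_image_sub_le_of_norm_deriv_le (f := Real.exp) (s := Set.Iic C)
        (C := Real.exp C) (x := φ y) (y := φ x) (fun z _ => Real.differentiableAt_exp)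
        (fun z hz => by
          rw [Real.deriv_exp, Real.norm_eq_abs, abs_of_pos (Real.exp_pos _)]
          exact Real.exp_le_exp.2 hz) (convex_Iic C)
        ((le_abs_self _).trans (hC y hy)) ((le_abs_self _).trans (hC x hx))
      simpa [dist_eq_norm] using this
    rw [absolutelyContinuousOnInterval_iff]
    intro ε hε
    obtain ⟨δ, hδ, H⟩ := (absolutelyContinuousOnInterval_iff φ a b).1 (h.ac a b)
      (ε / Real.exp C) (by positivity)
    refine ⟨δ, hδ, fun E hE hlt => ?_⟩
    have h1 := H E hE hlt
    rw [lt_div_iff₀ (Real.exp_pos _)] at h1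
    refine lt_of_le_of_lt ?_ h1
    rw [Finset.sum_mul]
    refine Finset.sum_le_sum fun i hi => ?_
    have := hE.1 i hi
    rw [mul_comm]
    exact hlip _ this.1 _ this.2
  · filter_upwards [h.ae] with t h1
    have := h1.exp
    rwa [mul_comm] at this

theorem Prim.of_int {φ' : ℝ → ℝ} (h : ∀ a b, IntervalIntegrable φ' volume a b) :
    Prim (fun t => ∫ s in (0:ℝ)..t, φ' s) φ' := ⟨h, fun t => by simp⟩

theorem Prim.congr {φ φ' φ₁ φ₁' : ℝ → ℝ} (h : Prim φ φ') (h1 : ∀ t, φ₁ t = φ t)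
    (h2 : ∀ t, φ₁' t = φ' t) : Prim φ₁ φ₁' := by
  have : φ₁ = φ := funext h1
  have h3 : φ₁' = φ' := funext h2
  rw [this, h3]; exact h

/-- Scalar Gronwall lemma with zero initial value. -/
theorem Prim.gronwall {y y' b : ℝ → ℝ} (h : Prim y y')
    (hb : ∀ x z, IntervalIntegrable b volume x z) (hle : ∀ t, |y' t| ≤ b t * y t)
    (h0 : y 0 = 0) (hnn : ∀ t, 0 ≤ y t) (t : ℝ) : y t = 0 := by
  have hB := Prim.of_int hb
  rcases le_total 0 t with ht | ht
  · have hz := (hB.const_mul (-1)).exp.mul h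
    have := hz.eq t
    rw [h0] at this
    have h2 : ∫ s in (0:ℝ)..t, (-1 * b s * Real.exp (-1 * ∫ r in (0:ℝ)..s, b r) * y s +
        Real.exp (-1 * ∫ r in (0:ℝ)..s, b r) * y' s) ≤ 0 := by
      rw [← neg_nonneg, ← intervalIntegral.integral_neg]
      apply intervalIntegral.integral_nonneg ht
      intro s _
      have e1 := Real.exp_pos (-1 * ∫ r in (0:ℝ)..s, b r)
      have := (abs_le.1 (hle s)).2
      nlinarith
    have h3 : Real.exp (-1 * ∫ r in (0:ℝ)..t, b r) * y t ≤ 0 := by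
      rw [this]; simpa using h2
    have e1 := Real.exp_pos (-1 * ∫ r in (0:ℝ)..t, b r)
    have := hnn t
    nlinarith
  · have hz := hB.exp.mul h
    have := hz.eq t
    rw [h0] at this
    have h2 : ∫ s in (0:ℝ)..t, (b s * Real.exp (∫ r in (0:ℝ)..s, b r) * y s +
        Real.exp (∫ r in (0:ℝ)..s, b r) * y' s) ≤ 0 := by
      rw [intervalIntegral.integral_symm, neg_nonpos]
      apply intervalIntegral.integral_nonneg ht
      intro s _
      have e1 := Real.exp_pos (∫ r in (0:ℝ)..s, b r)
      have := (abs_le.1 (hle s)).1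
      nlinarith
    have h3 : Real.exp (∫ r in (0:ℝ)..t, b r) * y t ≤ 0 := by
      rw [this]; simpa using h2
    have e1 := Real.exp_pos (∫ r in (0:ℝ)..t, b r)
    have := hnn t
    nlinarith

theorem Prim.shift {φ φ' : ℝ → ℝ} (h : Prim φ φ') (r : ℝ) :
    Prim (fun t => φ (t + r)) (fun t => φ' (t + r)) := by
  constructor
  · intro a b
    have := (h.int (a + r) (b + r)).comp_add_right r
    simpa using this
  · intro t
    have h1 := h.sub_eq (0 + r) (t + r)
    rw [← intervalIntegral.integral_comp_add_right (fun s => φ' s) r] at h1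
    linarith

/-- Solutions of a linear Caratheodory system. -/
def Sol {N : ℕ} (B : ℝ → Matrix (Fin N) (Fin N) ℝ) (u : ℝ → Fin N → ℝ) : Prop :=
  ∀ i, Prim (fun t => u t i) (fun t => ∑ j, B t i j * u t j)

/-- Entrywise local integrability. -/
def LI {N : ℕ} (B : ℝ → Matrix (Fin N) (Fin N) ℝ) : Prop :=
  ∀ i j a b, IntervalIntegrable (fun t => B t i j) volume a b

/-- Sum of absolute values of the entries. -/
def tot {N : ℕ} (M : Matrix (Fin N) (Fin N) ℝ) : ℝ := ∑ i, ∑ j, |M i j|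

theorem abs_le_tot {N : ℕ} (M : Matrix (Fin N) (Fin N) ℝ) (i j : Fin N) : |M i j| ≤ tot M := by
  unfold tot
  refine le_trans ?_ (Finset.single_le_sum (f := fun i => ∑ j, |M i j|)
    (fun i _ => Finset.sum_nonneg fun j _ => abs_nonneg _) (Finset.mem_univ i))
  exact Finset.single_le_sum (f := fun j => |M i j|) (fun j _ => abs_nonneg _) (Finset.mem_univ j)

theorem row_le_tot {N : ℕ} (M : Matrix (Fin N) (Fin N) ℝ) (i : Fin N) :
    ∑ j, |M i j| ≤ tot M := by
  unfold tot
  exact Finset.single_le_sum (f := fun i => ∑ j, |M i j|)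
    (fun i _ => Finset.sum_nonneg fun j _ => abs_nonneg _) (Finset.mem_univ i)

theorem tot_nonneg {N : ℕ} (M : Matrix (Fin N) (Fin N) ℝ) : 0 ≤ tot M :=
  Finset.sum_nonneg fun _ _ => Finset.sum_nonneg fun _ _ => abs_nonneg _

theorem LI.tot {N : ℕ} {B : ℝ → Matrix (Fin N) (Fin N) ℝ} (h : LI B) (a b : ℝ) :
    IntervalIntegrable (fun t => tot (B t)) volume a b := by
  unfold _root_.tot
  have : (fun t => ∑ i, ∑ j, |B t i j|) = ∑ i, ∑ j, (fun t => |B t i j|) := by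
    funext t; simp
  rw [this]
  refine IntervalIntegrable.sum _ fun i _ => IntervalIntegrable.sum _ fun j _ => ?_
  exact (h i j a b).abs

theorem LI.row {N : ℕ} {B : ℝ → Matrix (Fin N) (Fin N) ℝ} (h : LI B) {u : ℝ → Fin N → ℝ}
    (hu : ∀ j, Continuous fun t => u t j) (i : Fin N) (a b : ℝ) :
    IntervalIntegrable (fun t => ∑ j, B t i j * u t j) volume a b := by
  have : (fun t => ∑ j, B t i j * u t j) = ∑ j, (fun t => B t i j * u t j) := by
    funext t; simp
  rw [this]
  refine IntervalIntegrable.sum _ fun j _ => ?_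
  exact (h i j a b).mul_continuousOn (hu j).continuousOn

theorem bilin_le {N : ℕ} (M : Matrix (Fin N) (Fin N) ℝ) (d : Fin N → ℝ) :
    |∑ i, (∑ j, M i j * d j) * d i| ≤ tot M * ∑ i, d i ^ 2 := by
  have key : ∀ i j, |d j| * |d i| ≤ ∑ i, d i ^ 2 := by
    intro i j
    have h1 : d i ^ 2 ≤ ∑ i, d i ^ 2 :=
      Finset.single_le_sum (f := fun i => d i ^ 2) (fun _ _ => sq_nonneg _) (Finset.mem_univ i)
    have h2 : d j ^ 2 ≤ ∑ i, d i ^ 2 :=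
      Finset.single_le_sum (f := fun i => d i ^ 2) (fun _ _ => sq_nonneg _) (Finset.mem_univ j)
    have h3 := sq_nonneg (|d j| - |d i|)
    have h4 := sq_abs (d i)
    have h5 := sq_abs (d j)
    nlinarith
  unfold tot
  rw [Finset.sum_mul]
  refine (Finset.abs_sum_le_sum_abs _ _).trans (Finset.sum_le_sum fun i _ => ?_)
  rw [abs_mul, Finset.sum_mul]
  refine (mul_le_mul_of_nonneg_right (Finset.abs_sum_le_sum_abs _ _) (abs_nonneg _)).trans ?_
  rw [Finset.sum_mul]
  refine Finset.sum_le_sum fun j _ => ?_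
  rw [abs_mul, mul_assoc]
  exact mul_le_mul_of_nonneg_left (key i j) (abs_nonneg _)

theorem Sol.smul_add {N : ℕ} {B : ℝ → Matrix (Fin N) (Fin N) ℝ} {u v : ℝ → Fin N → ℝ}
    (hu : Sol B u) (hv : Sol B v) (c : ℝ) : Sol B (fun t => u t + c • v t) := by
  intro i
  refine ((hu i).add ((hv i).const_mul c)).congr (fun t => by simp) (fun t => ?_)
  rw [Finset.mul_sum, ← Finset.sum_add_distrib]
  refine Finset.sum_congr rfl fun j _ => ?_
  simp; ring

theorem Sol.unique {N : ℕ} {B : ℝ → Matrix (Fin N) (Fin N) ℝ} (hB : LI B)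
    {u v : ℝ → Fin N → ℝ} (hu : Sol B u) (hv : Sol B v) (h0 : u 0 = v 0) (t : ℝ) :
    u t = v t := by
  have hd := hu.smul_add hv (-1)
  have hy := Prim.sum Finset.univ (fun i => (hd i).mul (hd i))
  have := hy.gronwall (b := fun t => 2 * tot (B t)) (fun a b => (hB.tot a b).const_mul 2)
    (fun t => ?_) ?_ ?_ t
  · funext i
    have h1 := (Finset.sum_eq_zero_iff_of_nonneg (fun i _ => mul_self_nonneg _)).1 this i
      (Finset.mem_univ i)
    have h2 := mul_self_eq_zero.1 h1
    simp at h2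
    linarith
  · have := bilin_le (B t) (u t + (-1:ℝ) • v t)
    have e1 : ∀ f g : Fin N → ℝ, ∑ i, (f i * g i + g i * f i) = 2 * ∑ i, f i * g i := by
      intro f g; rw [Finset.mul_sum]; exact Finset.sum_congr rfl fun i _ => by ring
    rw [e1, abs_mul, abs_two, mul_assoc]
    simp only [sq] at this
    linarith
  · simp [h0]
  · intro t; exact Finset.sum_nonneg fun i _ => mul_self_nonneg _

theorem Sol.shift {N : ℕ} {B : ℝ → Matrix (Fin N) (Fin N) ℝ} {u : ℝ → Fin N → ℝ}
    (hu : Sol B u) (r : ℝ) : Sol (fun t => B (t + r)) (fun t => u (t + r)) :=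
  fun i => (hu i).shift r

/-- Picard iterates. -/
noncomputable def pic {N : ℕ} (B : ℝ → Matrix (Fin N) (Fin N) ℝ) (u0 : Fin N → ℝ) :
    ℕ → ℝ → Fin N → ℝ
  | 0 => fun _ => u0
  | k + 1 => fun t i => u0 i + ∫ s in (0:ℝ)..t, ∑ j, B s i j * pic B u0 k s j

theorem pic_cont {N : ℕ} {B : ℝ → Matrix (Fin N) (Fin N) ℝ} (hB : LI B) (u0 : Fin N → ℝ)
    (k : ℕ) : ∀ i, Continuous fun t => pic B u0 k t i := by
  induction k with
  | zero => intro i; exact continuous_const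
  | succ k ih =>
    intro i
    exact continuous_const.add (intervalIntegral.continuous_primitive (hB.row ih i) 0)

theorem prim_pow {b : ℝ → ℝ} (hb : ∀ x z, IntervalIntegrable b volume x z) (k : ℕ) :
    Prim (fun t => (∫ s in (0:ℝ)..t, b s) ^ (k+1) / (k+1).factorial)
      (fun t => b t * ((∫ s in (0:ℝ)..t, b s) ^ k / k.factorial)) := by
  have hα := Prim.of_int hb
  have main : ∀ k : ℕ, Prim (fun t => (∫ s in (0:ℝ)..t, b s) ^ (k+1))
      (fun t => (k+1) * (b t * (∫ s in (0:ℝ)..t, b s) ^ k)) := by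
    intro k
    induction k with
    | zero => simpa using hα
    | succ k ih =>
      refine (ih.mul hα).congr (fun t => by ring) (fun t => ?_)
      push_cast; ring
  refine ((main k).const_mul (1 / (k+1).factorial)).congr (fun t => by ring) (fun t => ?_)
  rw [Nat.factorial_succ]; push_cast
  have : (k.factorial : ℝ) ≠ 0 := by positivity
  field_simp

theorem pic_bound {N : ℕ} {B : ℝ → Matrix (Fin N) (Fin N) ℝ} (hB : LI B)
    {u : ℝ → Fin N → ℝ} (hu : Sol B u) {T C : ℝ}
    (hC : ∀ t ∈ Set.Icc 0 T, ∀ i, |u 0 i - u t i| ≤ C) (k : ℕ) :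
    ∀ t ∈ Set.Icc 0 T, ∀ i,
      |pic B (u 0) k t i - u t i| ≤ C * ((∫ s in (0:ℝ)..t, tot (B s)) ^ k / k.factorial) := by
  induction k with
  | zero => intro t ht i; simpa [pic] using hC t ht i
  | succ k ih =>
    intro t ht i
    have hp := (prim_pow hB.tot k).const_mul C
    have h1 := hp.eq t
    rw [intervalIntegral.integral_same, zero_pow (Nat.succ_ne_zero k), zero_div, mul_zero,
      zero_add] at h1
    rw [h1, (hu i).eq t]
    simp only [pic]
    have i1 := hB.row (pic_cont hB (u 0) k) i 0 t
    have i2 := (hu i).int 0 t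
    rw [add_sub_add_left_eq_sub, ← intervalIntegral.integral_sub i1 i2]
    refine (intervalIntegral.abs_integral_le_integral_abs ht.1).trans ?_
    have h2 := intervalIntegral.integral_mono_on ht.1 (i1.sub i2).abs (hp.int 0 t)
      (fun s hs => by
        have hs' : s ∈ Set.Icc 0 T := ⟨hs.1, hs.2.trans ht.2⟩
        show |∑ j, B s i j * pic B (u 0) k s j - ∑ j, B s i j * u s j| ≤ C * _
        rw [← Finset.sum_sub_distrib]
        refine (Finset.abs_sum_le_sum_abs _ _).trans ?_
        have hb : ∀ j ∈ Finset.univ, |B s i j * pic B (u 0) k s j - B s i j * u s j| ≤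
            |B s i j| * (C * ((∫ r in (0:ℝ)..s, tot (B r)) ^ k / k.factorial)) := by
          intro j _
          rw [← mul_sub, abs_mul]
          exact mul_le_mul_of_nonneg_left (ih s hs' j) (abs_nonneg _)
        refine (Finset.sum_le_sum hb).trans ?_
        rw [← Finset.sum_mul]
        have h3 : 0 ≤ C * ((∫ r in (0:ℝ)..s, tot (B r)) ^ k / k.factorial) :=
          (abs_nonneg _).trans (ih s hs' i)
        have := mul_le_mul_of_nonneg_right (row_le_tot (B s) i) h3
        refine this.trans (le_of_eq ?_)
        ring)
    exact h2

theorem pic_tendsto {N : ℕ} {B : ℝ → Matrix (Fin N) (Fin N) ℝ} (hB : LI B)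
    {u : ℝ → Fin N → ℝ} (hu : Sol B u) {t : ℝ} (ht : 0 ≤ t) (i : Fin N) :
    Tendsto (fun k => pic B (u 0) k t i) atTop (nhds (u t i)) := by
  have hc : ∀ i : Fin N, ∃ C, ∀ s ∈ Set.Icc 0 t, |u 0 i - u s i| ≤ C := by
    intro i
    have : ContinuousOn (fun s => u 0 i - u s i) (Set.Icc 0 t) :=
      (continuous_const.sub (hu i).continuous).continuousOn
    obtain ⟨C, hC⟩ := isCompact_Icc.exists_bound_of_continuousOn this
    exact ⟨C, fun s hs => by simpa using hC s hs⟩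
  choose C hC using hc
  have hbd := fun k => pic_bound hB hu (T := t) (C := ∑ i, |C i|) (fun s hs i =>
    ((hC i s hs).trans (le_abs_self _)).trans
      (Finset.single_le_sum (f := fun i => |C i|) (fun _ _ => abs_nonneg _) (Finset.mem_univ i)))
      k t ⟨ht, le_rfl⟩ i
  rw [tendsto_iff_dist_tendsto_zero]
  refine squeeze_zero (fun _ => dist_nonneg) hbd ?_
  have := (FloorSemiring.tendsto_pow_div_factorial_atTop (∫ s in (0:ℝ)..t, tot (B s))).const_mul
    (∑ i, |C i|)
  simpa using this

theorem pic_nonneg {N : ℕ} {B : ℝ → Matrix (Fin N) (Fin N) ℝ} (hB : ∀ t i j, 0 ≤ B t i j)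
    {u0 : Fin N → ℝ} (h0 : ∀ i, 0 ≤ u0 i) (k : ℕ) : ∀ t, 0 ≤ t → ∀ i, 0 ≤ pic B u0 k t i := by
  induction k with
  | zero => intro t _ i; exact h0 i
  | succ k ih =>
    intro t ht i
    refine add_nonneg (h0 i) (intervalIntegral.integral_nonneg ht fun s hs => ?_)
    exact Finset.sum_nonneg fun j _ => mul_nonneg (hB s i j) (ih s hs.1 j)

theorem Sol.nonneg {N : ℕ} {B : ℝ → Matrix (Fin N) (Fin N) ℝ} (hB : LI B)
    (hpos : ∀ t i j, i ≠ j → 0 ≤ B t i j) {u : ℝ → Fin N → ℝ} (hu : Sol B u)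
    (h0 : ∀ i, 0 ≤ u 0 i) {t : ℝ} (ht : 0 ≤ t) (i : Fin N) : 0 ≤ u t i := by
  classical
  set M : ℝ → Matrix (Fin N) (Fin N) ℝ := fun t => B t + Matrix.diagonal fun _ => tot (B t) with hM
  have hMLI : LI M := by
    intro i j a b
    by_cases hij : i = j
    · subst hij
      simpa [hM] using (hB i i a b).add (hB.tot a b)
    · simpa [hM, Matrix.diagonal_apply_ne _ hij] using hB i j a b
  have hMpos : ∀ t i j, 0 ≤ M t i j := by
    intro t i j
    by_cases hij : i = j
    · subst hij
      have := (abs_le.1 (abs_le_tot (B t) i i)).1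
      simp [hM]; linarith
    · simpa [hM, Matrix.diagonal_apply_ne _ hij] using hpos t i j hij
  have hexp := (Prim.of_int hB.tot).exp
  set E : ℝ → ℝ := fun t => Real.exp (∫ s in (0:ℝ)..t, tot (B s)) with hE
  have hv : Sol M (fun t => E t • u t) := by
    intro i
    refine (hexp.mul (hu i)).congr (fun t => by simp [hE]) (fun t => ?_)
    simp only [hM, Matrix.add_apply, Pi.smul_apply, smul_eq_mul, add_mul, Finset.sum_add_distrib,
      Matrix.diagonal_apply, ite_mul, zero_mul, Finset.sum_ite_eq, Finset.mem_univ, if_true]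
    rw [Finset.mul_sum, add_comm]
    congr 1
    · ring
    · exact Finset.sum_congr rfl fun j _ => by ring
  have h1 := pic_tendsto hMLI hv ht i
  have h2 : 0 ≤ E t * u t i := by
    refine ge_of_tendsto' h1 fun k => pic_nonneg hMpos ?_ k t ht i
    intro i
    exact mul_nonneg (Real.exp_pos _).le (h0 i)
  have : 0 < E t := Real.exp_pos _
  exact nonneg_of_mul_nonneg_right h2 this

/-- Running maxima of Birkhoff sums. -/
noncomputable def mx {Ω : Type*} (T : Ω → Ω) (F : Ω → ℝ) : ℕ → Ω → ℝ
  | 0 => F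
  | n + 1 => fun ω => F ω + max 0 (mx T F n (T ω))

theorem mx_mono {Ω : Type*} (T : Ω → Ω) (F : Ω → ℝ) (n : ℕ) :
    ∀ ω, mx T F n ω ≤ mx T F (n+1) ω := by
  induction n with
  | zero => intro ω; simp [mx]
  | succ n ih => intro ω; simp only [mx]; exact add_le_add le_rfl (max_le_max le_rfl (ih _))

theorem le_mx {Ω : Type*} (T : Ω → Ω) (F : Ω → ℝ) (n : ℕ) :
    ∀ ω, birkhoffSum T F (n+1) ω ≤ mx T F n ω := by
  induction n with
  | zero => intro ω; simp [mx]
  | succ n ih =>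
    intro ω
    rw [birkhoffSum_succ']
    exact add_le_add le_rfl ((ih _).trans (le_max_right _ _))

theorem F_le_mx {Ω : Type*} (T : Ω → Ω) (F : Ω → ℝ) (n : ℕ) (ω : Ω) : F ω ≤ mx T F n ω := by
  cases n with
  | zero => exact le_rfl
  | succ n => simp [mx]

theorem mx_int {Ω : Type*} [MeasurableSpace Ω] {ℙ : Measure Ω} {T : Ω → Ω}
    (hT : MeasurePreserving T ℙ ℙ) {F : Ω → ℝ} (hF : Integrable F ℙ) (n : ℕ) :
    Integrable (mx T F n) ℙ := by
  induction n with
  | zero => exact hF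
  | succ n ih =>
    have : Integrable (fun ω => max 0 (mx T F n ω)) ℙ := (integrable_zero _ _ _).sup ih
    exact hF.add (hT.integrable_comp_of_integrable this)

theorem maximal {Ω : Type*} [MeasurableSpace Ω] {ℙ : Measure Ω} {T : Ω → Ω}
    (hT : MeasurePreserving T ℙ ℙ) {F : Ω → ℝ} (hF : Integrable F ℙ)
    (h : ∀ᵐ ω ∂ℙ, ∃ n, 0 < birkhoffSum T F (n+1) ω) : 0 ≤ ∫ ω, F ω ∂ℙ := by
  have hpos : ∀ n, Integrable (fun ω => max 0 (mx T F n ω)) ℙ :=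
    fun n => (integrable_zero _ _ _).sup (mx_int hT hF n)
  have hmin : ∀ n, Integrable (fun ω => mx T F n ω - max 0 (mx T F n ω)) ℙ :=
    fun n => (mx_int hT hF n).sub (hpos n)
  have h1 : ∀ n, ∫ ω, (mx T F n ω - max 0 (mx T F n ω)) ∂ℙ ≤ ∫ ω, F ω ∂ℙ := by
    intro n
    have e1 : ∫ ω, max 0 (mx T F n (T ω)) ∂ℙ = ∫ ω, max 0 (mx T F n ω) ∂ℙ := by
      have := integral_map (μ := ℙ) hT.measurable.aemeasurable
        (f := fun ω => max 0 (mx T F n ω)) (by rw [hT.map_eq]; exact (hpos n).aestronglyMeasurable)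
      rw [hT.map_eq] at this
      exact this.symm
    have e2 : ∫ ω, mx T F (n+1) ω ∂ℙ = ∫ ω, F ω ∂ℙ + ∫ ω, max 0 (mx T F n ω) ∂ℙ := by
      rw [← e1]
      exact integral_add hF (hT.integrable_comp_of_integrable (hpos n))
    have e3 := integral_mono (mx_int hT hF n) (mx_int hT hF (n+1)) (mx_mono T F n)
    rw [integral_sub (mx_int hT hF n) (hpos n)]
    linarith
  have h2 : Tendsto (fun n => ∫ ω, (mx T F n ω - max 0 (mx T F n ω)) ∂ℙ) atTop
      (nhds (∫ ω, (0:ℝ) ∂ℙ)) := by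
    refine tendsto_integral_of_dominated_convergence (fun ω => |F ω|)
      (fun n => (hmin n).aestronglyMeasurable) hF.abs (fun n => ?_) ?_
    · filter_upwards with ω
      have := F_le_mx T F n ω
      rw [Real.norm_eq_abs]
      rcases le_total 0 (mx T F n ω) with h | h
      · rw [max_eq_right h]; simp
      · rw [max_eq_left h, sub_zero, abs_of_nonpos h, abs_of_nonpos (this.trans h)]; linarith
    · filter_upwards [h] with ω ⟨n, hn⟩
      refine tendsto_const_nhds.congr' ?_
      filter_upwards [eventually_ge_atTop n] with m hm
      have hmono : Monotone fun n => mx T F n ω := monotone_nat_of_le_succ fun n => mx_mono T F n ω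
      have : 0 < mx T F m ω := (hn.trans_le (le_mx T F n ω)).trans_le (hmono hm)
      rw [max_eq_right this.le]; simp
  rw [integral_zero] at h2
  exact (le_of_tendsto' h2 h1)

def Good {Ω : Type*} (θ : ℝ → Ω → Ω) (g : Ω → ℝ) (a : ℝ) (ω : Ω) : Prop :=
  ∀ b > a, ∀ᶠ t : ℝ in atTop, ∫ s in (0:ℝ)..t, g (θ s ω) ≤ b * t

theorem S_shift {Ω : Type*} {θ : ℝ → Ω → Ω} (hθadd : ∀ s t : ℝ, θ (s + t) = θ s ∘ θ t)
    {g : Ω → ℝ} {ω : Ω} (hg : ∀ a c, IntervalIntegrable (fun t => g (θ t ω)) volume a c)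
    (r t : ℝ) : ∫ s in (0:ℝ)..t, g (θ s (θ r ω)) =
      (∫ s in (0:ℝ)..(t+r), g (θ s ω)) - ∫ s in (0:ℝ)..r, g (θ s ω) := by
  have : ∀ s, θ s (θ r ω) = θ (s + r) ω := fun s => by rw [hθadd]; rfl
  simp only [this]
  rw [intervalIntegral.integral_comp_add_right (fun s => g (θ s ω)) r,
    intervalIntegral.integral_interval_sub_left (hg _ _) (hg _ _), zero_add]

theorem Good.shift {Ω : Type*} {θ : ℝ → Ω → Ω} (hθadd : ∀ s t : ℝ, θ (s + t) = θ s ∘ θ t)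
    {g : Ω → ℝ} {ω : Ω} (hg : ∀ a c, IntervalIntegrable (fun t => g (θ t ω)) volume a c)
    {a : ℝ} (h : Good θ g a ω) (r : ℝ) : Good θ g a (θ r ω) := by
  intro b hb
  obtain ⟨b', h1, h2⟩ := exists_between hb
  have h3 := (tendsto_atTop_add_const_right atTop r tendsto_id).eventually (h b' h1)
  have hbb : 0 < b - b' := by linarith
  filter_upwards [h3, eventually_ge_atTop ((b' * r - ∫ s in (0:ℝ)..r, g (θ s ω)) / (b - b'))]
    with t ht1 ht2
  rw [S_shift hθadd hg]
  rw [div_le_iff₀ hbb] at ht2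
  simp only [id] at ht1
  nlinarith

theorem flow_iter {Ω : Type*} {θ : ℝ → Ω → Ω} (hθ0 : θ 0 = id)
    (hθadd : ∀ s t : ℝ, θ (s + t) = θ s ∘ θ t) (r : ℝ) (n : ℕ) : (θ r)^[n] = θ (n * r) := by
  induction n with
  | zero => simp [hθ0]
  | succ n ih => rw [Function.iterate_succ, ih, ← hθadd]; congr 1; push_cast; ring

theorem birk1 {Ω : Type*} [MeasurableSpace Ω] (ℙ : Measure Ω) [IsProbabilityMeasure ℙ]
    (θ : ℝ → Ω → Ω) (hθ0 : θ 0 = id)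
    (hθadd : ∀ s t : ℝ, θ (s + t) = θ s ∘ θ t)
    (hθjm : Measurable fun p : ℝ × Ω => θ p.1 p.2)
    (hθmp : ∀ t, MeasurePreserving (θ t) ℙ ℙ)
    (hθerg : ∀ F : Set Ω, MeasurableSet F → (∀ t, θ t ⁻¹' F = F) →
      ℙ F = 0 ∨ ℙ F = 1)
    (g : Ω → ℝ) (hgm : Measurable g) (hgi : Integrable g ℙ) (hg0 : ∀ ω, 0 ≤ g ω)
    (hg : ∀ ω a c, IntervalIntegrable (fun t => g (θ t ω)) volume a c) :
    ∀ᵐ ω ∂ℙ, Good θ g (∫ ω, g ω ∂ℙ) ω := by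
  have hmono : ∀ ω (s t : ℝ), 0 ≤ s → s ≤ t →
      ∫ r in (0:ℝ)..s, g (θ r ω) ≤ ∫ r in (0:ℝ)..t, g (θ r ω) := by
    intro ω s t hs hst
    rw [← sub_nonneg, intervalIntegral.integral_interval_sub_left (hg _ _ _) (hg _ _ _)]
    exact intervalIntegral.integral_nonneg hst fun _ _ => hg0 _
  have hmeas : ∀ n : ℕ, Measurable fun ω => ∫ s in (0:ℝ)..n, g (θ s ω) := by
    intro n
    simp only [intervalIntegral.integral_of_le (Nat.cast_nonneg n : (0:ℝ) ≤ n)]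
    exact ((hgm.comp hθjm).stronglyMeasurable.integral_prod_left'
      (μ := volume.restrict (Set.Ioc 0 (n:ℝ)))).measurable
  have hsk : Integrable (fun p : ℝ × Ω => g (θ p.1 p.2))
      ((volume.restrict (Set.Ioc (0:ℝ) 1)).prod ℙ) := by
    have hmp := MeasurePreserving.skew_product (MeasurePreserving.id
      (volume.restrict (Set.Ioc (0:ℝ) 1))) (g := θ) (μc := ℙ) (μd := ℙ) hθjm
      (Eventually.of_forall fun t => (hθmp t).map_eq)
    exact hmp.integrable_comp_of_integrable (g := fun p : ℝ × Ω => g p.2) (hgi.comp_snd _)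
  have hF1 : Integrable (fun ω => ∫ s in (0:ℝ)..1, g (θ s ω)) ℙ := by
    simp only [intervalIntegral.integral_of_le zero_le_one]
    exact hsk.integral_prod_right
  have hF2 : ∫ ω, (∫ s in (0:ℝ)..1, g (θ s ω)) ∂ℙ = ∫ ω, g ω ∂ℙ := by
    simp only [intervalIntegral.integral_of_le zero_le_one]
    rw [← integral_integral_swap (f := fun s ω => g (θ s ω)) hsk]
    have : ∀ s, ∫ ω, g (θ s ω) ∂ℙ = ∫ ω, g ω ∂ℙ := by
      intro s
      have := integral_map (μ := ℙ) (hθmp s).measurable.aemeasurable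
        (f := g) (by rw [(hθmp s).map_eq]; exact hgi.aestronglyMeasurable)
      rw [(hθmp s).map_eq] at this
      exact this.symm
    simp [this]
  have hBS : ∀ (a : ℝ) (n : ℕ) ω,
      birkhoffSum (θ 1) (fun ω => (∫ s in (0:ℝ)..1, g (θ s ω)) - a) n ω =
        (∫ s in (0:ℝ)..n, g (θ s ω)) - a * n := by
    intro a n ω
    induction n with
    | zero => simp
    | succ n ih =>
      rw [birkhoffSum_succ, ih, flow_iter hθ0 hθadd, S_shift hθadd (hg ω)]
      push_cast; ring_nf
  have hint0 : 0 ≤ ∫ ω, g ω ∂ℙ := integral_nonneg hg0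
  have key : ∀ a > ∫ ω, g ω ∂ℙ, ∀ᵐ ω ∂ℙ, Good θ g a ω := by
    intro a ha
    have hdisc : ∀ ω, Good θ g a ω ↔ ∀ j : ℕ, ∀ᶠ n : ℕ in atTop,
        ∫ s in (0:ℝ)..n, g (θ s ω) ≤ (a + 1 / (j + 1)) * n := by
      intro ω
      constructor
      · intro h j
        exact tendsto_natCast_atTop_atTop.eventually
          (h (a + 1 / (j+1)) (by have : (0:ℝ) < 1 / (j+1) := by positivity
                                 linarith))
      · intro h b hb
        obtain ⟨j, hj⟩ := exists_nat_one_div_lt (sub_pos.2 hb)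
        set b' := a + 1 / ((j:ℝ) + 1) with hb'
        have hbb : 0 < b - b' := by linarith
        have hb'0 : 0 ≤ b' := by have : (0:ℝ) < 1 / (j+1) := by positivity
                                 linarith
        have h1 := (tendsto_nat_ceil_atTop (α := ℝ)).eventually (h j)
        filter_upwards [h1, eventually_ge_atTop (b' / (b - b')), eventually_ge_atTop 0]
          with t ht1 ht2 ht0
        rw [div_le_iff₀ hbb] at ht2
        have h2 := hmono ω t ⌈t⌉₊ ht0 (Nat.le_ceil t)
        have h3 := (Nat.ceil_lt_add_one ht0).le
        have h4 := mul_le_mul_of_nonneg_left h3 hb'0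
        nlinarith
    have hGm : MeasurableSet {ω | Good θ g a ω} := by
      have : {ω | Good θ g a ω} = ⋂ j : ℕ, ⋃ n0 : ℕ, ⋂ n : ℕ, ⋂ _ : n0 ≤ n,
          {ω | ∫ s in (0:ℝ)..n, g (θ s ω) ≤ (a + 1 / (j + 1)) * n} := by
        ext ω; simp [hdisc, eventually_atTop]
      rw [this]
      refine MeasurableSet.iInter fun j => MeasurableSet.iUnion fun n0 =>
        MeasurableSet.iInter fun n => MeasurableSet.iInter fun _ => ?_
      exact measurableSet_le (hmeas n) measurable_const
    have hGi : ∀ t, θ t ⁻¹' {ω | Good θ g a ω} = {ω | Good θ g a ω} := by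
      intro t
      ext ω
      constructor
      · intro h
        have := Good.shift hθadd (hg _) h (-t)
        have e : θ (-t) (θ t ω) = ω := by
          have := congrFun (hθadd (-t) t) ω
          simpa [hθ0] using this.symm
        rwa [e] at this
      · intro h
        exact Good.shift hθadd (hg _) h t
    rcases hθerg _ hGm hGi with h | h
    · exfalso
      have hae : ∀ᵐ ω ∂ℙ, ¬ Good θ g a ω := by
        rw [ae_iff]; simpa using h
      have := maximal (hθmp 1) (F := fun ω => (∫ s in (0:ℝ)..1, g (θ s ω)) - a)
        (hF1.sub (integrable_const a)) (by
          filter_upwards [hae] with ω hω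
          rw [hdisc] at hω
          push Not at hω
          obtain ⟨j, hj⟩ := hω
          obtain ⟨n, hn1, hn2⟩ := (hj.and_eventually (eventually_ge_atTop 1)).exists
          refine ⟨n - 1, ?_⟩
          rw [Nat.sub_add_cancel hn2, hBS]
          have : (0:ℝ) ≤ 1 / (j+1) * n := by positivity
          linarith)
      rw [integral_sub hF1 (integrable_const a), hF2] at this
      simp at this
      linarith
    · exact (mem_ae_iff_prob_eq_one hGm).2 h
  have hall : ∀ᵐ ω ∂ℙ, ∀ m : ℕ, Good θ g ((∫ ω, g ω ∂ℙ) + 1 / (m + 1)) ω := by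
    rw [ae_all_iff]
    intro m
    refine key _ ?_
    have : (0:ℝ) < 1 / (m+1) := by positivity
    linarith
  filter_upwards [hall] with ω hω b hb
  obtain ⟨j, hj⟩ := exists_nat_one_div_lt (sub_pos.2 hb)
  exact hω j b (by linarith)

theorem birkUpper {Ω : Type*} [MeasurableSpace Ω] (ℙ : Measure Ω) [IsProbabilityMeasure ℙ]
    (θ : ℝ → Ω → Ω) (hθ0 : θ 0 = id)
    (hθadd : ∀ s t : ℝ, θ (s + t) = θ s ∘ θ t)
    (hθjm : Measurable fun p : ℝ × Ω => θ p.1 p.2)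
    (hθmp : ∀ t, MeasurePreserving (θ t) ℙ ℙ)
    (hθerg : ∀ F : Set Ω, MeasurableSet F → (∀ t, θ t ⁻¹' F = F) →
      ℙ F = 0 ∨ ℙ F = 1)
    (f : Ω → ℝ) (hfm : Measurable f)
    (hf : ∀ ω a c, IntervalIntegrable (fun t => f (θ t ω)) volume a c)
    (k : ℕ) (hfi : Integrable (fun ω => max (f ω) (-k)) ℙ) :
    ∀ᵐ ω ∂ℙ, Good θ f (∫ ω, max (f ω) (-k) ∂ℙ) ω := by
  have hmax : ∀ ω a c, IntervalIntegrable (fun t => max (f (θ t ω)) (-k)) volume a c := by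
    intro ω a c
    have h1 := hf ω a c
    have h2 : IntervalIntegrable (fun _ : ℝ => (-k:ℝ)) volume a c := intervalIntegrable_const
    exact ⟨h1.1.sup h2.1, h1.2.sup h2.2⟩
  have h := birk1 ℙ θ hθ0 hθadd hθjm hθmp hθerg (fun ω => max (f ω) (-k) + k)
    ((hfm.max measurable_const).add_const _) (hfi.add (integrable_const _))
    (fun ω => by have := le_max_right (f ω) (-k:ℝ); linarith)
    (fun ω a c => (hmax ω a c).add intervalIntegrable_const)
  filter_upwards [h] with ω hω b hb
  have e : ∫ ω, (max (f ω) (-k) + k) ∂ℙ = ∫ ω, max (f ω) (-k) ∂ℙ + k := by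
    rw [integral_add hfi (integrable_const _)]; simp
  filter_upwards [hω (b + k) (by rw [e]; linarith), eventually_ge_atTop 0] with t ht ht0
  rw [intervalIntegral.integral_add (hmax ω 0 t) intervalIntegrable_const] at ht
  have h1 := intervalIntegral.integral_mono_on ht0 (hf ω 0 t) (hmax ω 0 t)
    (fun s _ => le_max_left _ _)
  simp at ht
  linarith

theorem Good.of_lim {Ω : Type*} {θ : ℝ → Ω → Ω} {g : Ω → ℝ} {ω : Ω} {c : ℕ → ℝ} {a : ℝ}
    (h : ∀ k, Good θ g (c k) ω) (hc : ∀ b > a, ∃ k, c k < b) : Good θ g a ω := by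
  intro b hb
  obtain ⟨k, hk⟩ := hc b hb
  exact h k b hk

theorem birk2 {Ω : Type*} [MeasurableSpace Ω] (ℙ : Measure Ω) [IsProbabilityMeasure ℙ]
    (θ : ℝ → Ω → Ω) (hθ0 : θ 0 = id)
    (hθadd : ∀ s t : ℝ, θ (s + t) = θ s ∘ θ t)
    (hθjm : Measurable fun p : ℝ × Ω => θ p.1 p.2)
    (hθmp : ∀ t, MeasurePreserving (θ t) ℙ ℙ)
    (hθerg : ∀ F : Set Ω, MeasurableSet F → (∀ t, θ t ⁻¹' F = F) →
      ℙ F = 0 ∨ ℙ F = 1)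
    (f : Ω → ℝ) (hfm : Measurable f)
    (hf : ∀ ω a c, IntervalIntegrable (fun t => f (θ t ω)) volume a c)
    (hfi : Integrable f ℙ) :
    ∀ᵐ ω ∂ℙ, Good θ f (∫ ω, f ω ∂ℙ) ω := by
  have hfk : ∀ k : ℕ, Integrable (fun ω => max (f ω) (-k)) ℙ :=
    fun k => hfi.sup (integrable_const _)
  have h1 : ∀ᵐ ω ∂ℙ, ∀ k : ℕ, Good θ f (∫ ω, max (f ω) (-k) ∂ℙ) ω :=
    ae_all_iff.2 fun k => birkUpper ℙ θ hθ0 hθadd hθjm hθmp hθerg f hfm hf k (hfk k)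
  have h2 : Tendsto (fun k : ℕ => ∫ ω, max (f ω) (-k) ∂ℙ) atTop (nhds (∫ ω, f ω ∂ℙ)) := by
    refine tendsto_integral_of_dominated_convergence (fun ω => |f ω|)
      (fun k => (hfk k).aestronglyMeasurable) hfi.abs (fun k => ?_) ?_
    · filter_upwards with ω
      rw [Real.norm_eq_abs]
      have hk : (0:ℝ) ≤ k := Nat.cast_nonneg k
      rcases le_total (f ω) (-k:ℝ) with h | h
      · rw [max_eq_right h, abs_of_nonpos (by linarith), abs_of_nonpos (by linarith)]; linarith
      · rw [max_eq_left h]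
    · filter_upwards with ω
      refine tendsto_const_nhds.congr' ?_
      obtain ⟨n, hn⟩ := exists_nat_ge (-f ω)
      filter_upwards [eventually_ge_atTop n] with m hm
      have : (n:ℝ) ≤ m := by exact_mod_cast hm
      rw [max_eq_left (by linarith)]
  filter_upwards [h1] with ω hω
  exact Good.of_lim hω fun b hb => (h2.eventually (gt_mem_nhds hb)).exists

theorem birk3 {Ω : Type*} [MeasurableSpace Ω] (ℙ : Measure Ω) [IsProbabilityMeasure ℙ]
    (θ : ℝ → Ω → Ω) (hθ0 : θ 0 = id)
    (hθadd : ∀ s t : ℝ, θ (s + t) = θ s ∘ θ t)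
    (hθjm : Measurable fun p : ℝ × Ω => θ p.1 p.2)
    (hθmp : ∀ t, MeasurePreserving (θ t) ℙ ℙ)
    (hθerg : ∀ F : Set Ω, MeasurableSet F → (∀ t, θ t ⁻¹' F = F) →
      ℙ F = 0 ∨ ℙ F = 1)
    (f : Ω → ℝ) (hfm : Measurable f)
    (hf : ∀ ω a c, IntervalIntegrable (fun t => f (θ t ω)) volume a c)
    (hfp : Integrable (fun ω => max (f ω) 0) ℙ) (hni : ¬ Integrable f ℙ) :
    ∀ᵐ ω ∂ℙ, ∀ a, Good θ f a ω := by
  have hfk : ∀ k : ℕ, Integrable (fun ω => max (f ω) (-k)) ℙ := by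
    intro k
    refine Integrable.mono' (hfp.add (integrable_const (k:ℝ)))
      (hfm.max measurable_const).aestronglyMeasurable (Eventually.of_forall fun ω => ?_)
    have hk : (0:ℝ) ≤ k := Nat.cast_nonneg k
    simp only [Real.norm_eq_abs, Pi.add_apply]
    rw [abs_le]
    constructor
    · have := le_max_right (f ω) (-k:ℝ); have := le_max_right (f ω) (0:ℝ); linarith
    · refine max_le ?_ ?_
      · have := le_max_left (f ω) (0:ℝ); linarith
      · have := le_max_right (f ω) (0:ℝ); linarith
  have h1 : ∀ᵐ ω ∂ℙ, ∀ k : ℕ, Good θ f (∫ ω, max (f ω) (-k) ∂ℙ) ω :=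
    ae_all_iff.2 fun k => birkUpper ℙ θ hθ0 hθadd hθjm hθmp hθerg f hfm hf k (hfk k)
  have h2 : ∀ c : ℝ, ∃ k : ℕ, ∫ ω, max (f ω) (-k) ∂ℙ < c := by
    by_contra! hcon
    obtain ⟨c, hc⟩ := hcon
    apply hni
    set d : ℕ → Ω → ℝ := fun k ω => max (f ω) 0 - max (f ω) (-k) with hd
    have hdi : ∀ k, Integrable (d k) ℙ := fun k => hfp.sub (hfk k)
    have hd0 : ∀ k ω, 0 ≤ d k ω := by
      intro k ω
      have hk : (0:ℝ) ≤ k := Nat.cast_nonneg k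
      exact sub_nonneg.2 (max_le_max le_rfl (by linarith))
    have hl : ∀ k, ∫⁻ ω, ENNReal.ofReal (d k ω) ∂ℙ ≤
        ENNReal.ofReal ((∫ ω, max (f ω) 0 ∂ℙ) - c) := by
      intro k
      rw [← ofReal_integral_eq_lintegral_ofReal (hdi k) (Eventually.of_forall (hd0 k))]
      apply ENNReal.ofReal_le_ofReal
      rw [integral_sub hfp (hfk k)]
      linarith [hc k]
    have hdm : ∀ k, Measurable (d k) := fun k =>
      (hfm.max measurable_const).sub (hfm.max measurable_const)
    have hF := lintegral_liminf_le (μ := ℙ) (u := atTop) (f := fun k ω => ENNReal.ofReal (d k ω))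
      (fun k => (hdm k).ennreal_ofReal)
    have hlim : ∀ ω, liminf (fun k => ENNReal.ofReal (d k ω)) atTop =
        ENNReal.ofReal (max (f ω) 0 - f ω) := by
      intro ω
      apply Tendsto.liminf_eq
      refine tendsto_const_nhds.congr' ?_
      obtain ⟨n, hn⟩ := exists_nat_ge (-f ω)
      filter_upwards [eventually_ge_atTop n] with m hm
      have : (n:ℝ) ≤ m := by exact_mod_cast hm
      simp only [hd]
      rw [max_eq_left (b := (-(m:ℝ))) (by linarith)]
    simp only [hlim] at hF
    have hbd : ∫⁻ ω, ENNReal.ofReal (max (f ω) 0 - f ω) ∂ℙ ≤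
        ENNReal.ofReal ((∫ ω, max (f ω) 0 ∂ℙ) - c) := by
      refine hF.trans ?_
      refine (liminf_le_liminf (Eventually.of_forall hl)).trans ?_
      simp
    have hint : Integrable (fun ω => max (f ω) 0 - f ω) ℙ := by
      refine ⟨((hfm.max measurable_const).sub hfm).aestronglyMeasurable, ?_⟩
      rw [hasFiniteIntegral_iff_ofReal (Eventually.of_forall fun ω => by simp)]
      exact hbd.trans_lt ENNReal.ofReal_lt_top
    have := hfp.sub hint
    refine this.congr (Eventually.of_forall fun ω => ?_)
    simp
  filter_upwards [h1] with ω hω a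
  exact Good.of_lim hω fun b _ => h2 b

theorem en_nonneg {N : ℕ} (u : Fin N → ℝ) : 0 ≤ enorm' u := Real.sqrt_nonneg _

theorem en_sq {N : ℕ} (u : Fin N → ℝ) : enorm' u ^ 2 = ∑ i, (u i) ^ 2 :=
  Real.sq_sqrt (Finset.sum_nonneg fun _ _ => sq_nonneg _)

theorem en_cont {N : ℕ} : Continuous (enorm' : (Fin N → ℝ) → ℝ) := by
  unfold enorm'; fun_prop

theorem en_abs_le {N : ℕ} (u : Fin N → ℝ) (i : Fin N) : |u i| ≤ enorm' u := by
  unfold enorm'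
  apply Real.abs_le_sqrt
  exact Finset.single_le_sum (f := fun i => u i ^ 2) (fun _ _ => sq_nonneg _) (Finset.mem_univ i)

theorem en_pos {N : ℕ} {u : Fin N → ℝ} (h : u ≠ 0) : 0 < enorm' u := by
  obtain ⟨i, hi⟩ := Function.ne_iff.1 h
  exact (abs_pos.2 hi).trans_le (en_abs_le u i)

theorem en_ne {N : ℕ} {u : Fin N → ℝ} (h : enorm' u = 1) : u ≠ 0 := by
  rintro rfl
  simp [enorm'] at h

theorem en_smul {N : ℕ} (c : ℝ) (u : Fin N → ℝ) : enorm' (c • u) = |c| * enorm' u := by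
  unfold enorm'
  simp only [Pi.smul_apply, smul_eq_mul, mul_pow]
  rw [← Finset.mul_sum, Real.sqrt_mul (sq_nonneg _), Real.sqrt_sq_eq_abs]

theorem en_mono {N : ℕ} {u v : Fin N → ℝ} (h : ∀ i, |u i| ≤ v i) : enorm' u ≤ enorm' v := by
  unfold enorm'
  refine Real.sqrt_le_sqrt (Finset.sum_le_sum fun i _ => ?_)
  rw [← sq_abs]
  exact pow_le_pow_left₀ (abs_nonneg _) (h i) 2

theorem en_normalize {N : ℕ} {u : Fin N → ℝ} (h : u ≠ 0) : enorm' ((enorm' u)⁻¹ • u) = 1 := by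
  rw [en_smul, abs_of_pos (inv_pos.2 (en_pos h)), inv_mul_cancel₀ (en_pos h).ne']

theorem en_compact {N : ℕ} : IsCompact {u : Fin N → ℝ | enorm' u = 1} := by
  apply Metric.isCompact_of_isClosed_isBounded
  · exact isClosed_eq en_cont continuous_const
  · refine (Metric.isBounded_iff_subset_closedBall 0).2 ⟨1, fun u hu => ?_⟩
    rw [mem_closedBall_zero_iff, pi_norm_le_iff_of_nonneg zero_le_one]
    intro i
    exact (en_abs_le u i).trans (le_of_eq hu)

theorem entry_le_eop {N : ℕ} (M : Matrix (Fin N) (Fin N) ℝ) (i j : Fin N) :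
    |M i j| ≤ eopNorm M := by
  classical
  have hbdd : BddAbove {c : ℝ | ∃ u : Fin N → ℝ, enorm' u ≤ 1 ∧ c = enorm' (M.mulVec u)} := by
    refine ⟨enorm' (fun _ : Fin N => tot M), ?_⟩
    rintro c ⟨u, hu, rfl⟩
    apply en_mono
    intro i
    refine le_trans ?_ (row_le_tot M i)
    show |∑ j, M i j * u j| ≤ _
    refine (Finset.abs_sum_le_sum_abs _ _).trans (Finset.sum_le_sum fun j _ => ?_)
    rw [abs_mul]
    exact mul_le_of_le_one_right (abs_nonneg _) ((en_abs_le u j).trans hu)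
  have h1 : enorm' (M.mulVec (Pi.single j 1)) ≤ eopNorm M := by
    refine le_csSup hbdd ⟨Pi.single j 1, ?_, rfl⟩
    unfold enorm'
    rw [Finset.sum_eq_single j]
    · simp
    · intro b _ hb; simp [hb]
    · simp
  have h2 := en_abs_le (M.mulVec (Pi.single j 1)) i
  rw [Matrix.mulVec_single_one] at h2
  exact h2.trans (by rw [Matrix.mulVec_single_one] at h1; exact h1)

/-- A cooperative linear random system together with its solution operator. -/
structure Sys {N : ℕ} {Ω : Type*} (θ : ℝ → Ω → Ω) (A : Ω → Matrix (Fin N) (Fin N) ℝ)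
    (U : Ω → ℝ → Matrix (Fin N) (Fin N) ℝ) : Prop where
  zero : θ 0 = id
  add : ∀ s t : ℝ, θ (s + t) = θ s ∘ θ t
  li : ∀ ω, LI (fun t => A (θ t ω))
  init : ∀ ω v, U ω 0 *ᵥ v = v
  sol : ∀ ω v, Sol (fun t => A (θ t ω)) (fun t => U ω t *ᵥ v)
  coop : ∀ ω i j, i ≠ j → 0 ≤ A ω i j

section
variable {N : ℕ} {Ω : Type*} {θ : ℝ → Ω → Ω} {A : Ω → Matrix (Fin N) (Fin N) ℝ}
  {U : Ω → ℝ → Matrix (Fin N) (Fin N) ℝ}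

theorem Sys.cocycle (S : Sys θ A U) (ω : Ω) (s r : ℝ) (v : Fin N → ℝ) :
    U (θ r ω) s *ᵥ (U ω r *ᵥ v) = U ω (s + r) *ᵥ v := by
  have h1 := S.sol (θ r ω) (U ω r *ᵥ v)
  have h2 := (S.sol ω v).shift r
  have e : (fun t => A (θ t (θ r ω))) = fun t => A (θ (t + r) ω) := by
    funext t; rw [S.add]; rfl
  have hli := S.li (θ r ω)
  rw [e] at h1 hli
  exact Sol.unique hli h1 h2 (by simp [S.init]) s

theorem Sys.flow_inv (S : Sys θ A U) (ω : Ω) (r : ℝ) : θ (-r) (θ r ω) = ω := by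
  have := congrFun (S.add (-r) r) ω
  simpa [S.zero] using this.symm

theorem Sys.flow_inv' (S : Sys θ A U) (ω : Ω) (r : ℝ) : θ r (θ (-r) ω) = ω := by
  have := congrFun (S.add r (-r)) ω
  simpa [S.zero] using this.symm

theorem Sys.inv (S : Sys θ A U) (ω : Ω) (r : ℝ) (v : Fin N → ℝ) :
    U (θ r ω) (-r) *ᵥ (U ω r *ᵥ v) = v := by
  rw [S.cocycle]; simp [S.init]

theorem Sys.inv' (S : Sys θ A U) (ω : Ω) (r : ℝ) (v : Fin N → ℝ) :
    U ω r *ᵥ (U (θ r ω) (-r) *ᵥ v) = v := by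
  have := S.inv (θ r ω) (-r) v
  rwa [S.flow_inv, neg_neg] at this

theorem Sys.ne (S : Sys θ A U) (ω : Ω) (r : ℝ) {v : Fin N → ℝ} (hv : v ≠ 0) :
    U ω r *ᵥ v ≠ 0 := by
  intro h
  apply hv
  rw [← S.inv ω r v, h, Matrix.mulVec_zero]

theorem Sys.pos (S : Sys θ A U) (ω : Ω) {t : ℝ} (ht : 0 ≤ t) {v : Fin N → ℝ}
    (hv : ∀ i, 0 ≤ v i) (i : Fin N) : 0 ≤ (U ω t *ᵥ v) i := by
  refine Sol.nonneg (S.li ω) (fun t i j h => S.coop _ i j h) (S.sol ω v) ?_ ht i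
  intro i; rw [S.init]; exact hv i

theorem Sys.pos_from (S : Sys θ A U) (ω : Ω) {s r : ℝ} (hsr : s ≤ r) {v : Fin N → ℝ}
    (hv : ∀ i, 0 ≤ (U ω s *ᵥ v) i) (i : Fin N) : 0 ≤ (U ω r *ᵥ v) i := by
  have := S.pos (θ s ω) (t := r - s) (by linarith) hv i
  rwa [S.cocycle, sub_add_cancel] at this

/-- The cone of initial values of entire nonnegative solutions. -/
def Cn (U : Ω → ℝ → Matrix (Fin N) (Fin N) ℝ) (ω : Ω) (v : Fin N → ℝ) : Prop :=
  ∀ r i, 0 ≤ (U ω r *ᵥ v) i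

theorem Cn.nonneg (S : Sys θ A U) {ω : Ω} {v : Fin N → ℝ} (h : Cn U ω v) (i : Fin N) :
    0 ≤ v i := by
  have := h 0 i
  rwa [S.init] at this

theorem Cn.shift (S : Sys θ A U) {ω : Ω} {v : Fin N → ℝ} (h : Cn U ω v) (r : ℝ) :
    Cn U (θ r ω) (U ω r *ᵥ v) := by
  intro s i
  rw [S.cocycle]; exact h _ i

theorem Cn.smul {ω : Ω} {v : Fin N → ℝ} (h : Cn U ω v) {c : ℝ} (hc : 0 ≤ c) :
    Cn U ω (c • v) := by
  intro r i
  rw [Matrix.mulVec_smul]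
  exact mul_nonneg hc (h r i)

theorem exists_pos_of_ne {v : Fin N → ℝ} (h : ∀ i, 0 ≤ v i) (hv : v ≠ 0) : ∃ i, 0 < v i := by
  obtain ⟨i, hi⟩ := Function.ne_iff.1 hv
  exact ⟨i, lt_of_le_of_ne (h i) (Ne.symm hi)⟩

theorem Cn.sub (S : Sys θ A U) {e : Fin N → ℝ} (he : ∀ i, 0 ≤ e i) {κ : Ω → ℝ}
    (hκ1 : ∀ ω, 1 ≤ κ ω)
    (hfocus : ∀ ω, ∀ u : Fin N → ℝ, (∀ i, 0 ≤ u i) → u ≠ 0 →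
      ∃ β : ℝ, 0 < β ∧ ∀ i, β * e i ≤ (U ω 1).mulVec u i ∧
        (U ω 1).mulVec u i ≤ κ ω * (β * e i))
    {ω : Ω} {K : ℝ} (hrec : ∃ᶠ n : ℕ in atTop, κ (θ (-(n:ℝ)) ω) ≤ K)
    {z v : Fin N → ℝ} (hz : Cn U ω z) (hv : Cn U ω v) (hz0 : z ≠ 0) (hv0 : v ≠ 0) :
    ∃ ε : ℝ, 0 < ε ∧ Cn U ω (z - ε • v) := by
  obtain ⟨i0, hi0⟩ := exists_pos_of_ne (hz.nonneg S) hz0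
  have hK : 1 ≤ K := by
    obtain ⟨n, hn⟩ := hrec.exists
    exact (hκ1 _).trans hn
  have hvi0 := hv.nonneg S i0
  refine ⟨z i0 / (K ^ 2 * (v i0 + 1)), by positivity, fun r i => ?_⟩
  obtain ⟨n0, hn0⟩ := exists_nat_ge (1 - r)
  obtain ⟨n, hn, hnn⟩ := (hrec.and_eventually (eventually_ge_atTop (max 1 n0))).exists
  have hn1 : (1:ℝ) ≤ n := by exact_mod_cast (le_max_left _ _).trans hnn
  have hn2 : (n0:ℝ) ≤ n := by exact_mod_cast (le_max_right _ _).trans hnn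
  obtain ⟨β, hβ, hb⟩ := hfocus (θ (-(n:ℝ)) ω) (U ω (-n) *ᵥ z) (hz _) (S.ne _ _ hz0)
  obtain ⟨β', hβ', hb'⟩ := hfocus (θ (-(n:ℝ)) ω) (U ω (-n) *ᵥ v) (hv _) (S.ne _ _ hv0)
  simp only [S.cocycle] at hb hb'
  have hup : z i0 ≤ K * (β / β') * v i0 := by
    have := S.pos_from ω (s := 1 + -(n:ℝ)) (r := 0) (by linarith)
      (v := (K * (β / β')) • v - z) (fun j => by
        rw [Matrix.mulVec_sub, Matrix.mulVec_smul]
        simp only [Pi.sub_apply, Pi.smul_apply, smul_eq_mul, sub_nonneg]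
        refine (hb j).2.trans ?_
        have h1 : κ (θ (-(n:ℝ)) ω) * (β * e j) ≤ K * (β * e j) :=
          mul_le_mul_of_nonneg_right hn (mul_nonneg hβ.le (he j))
        refine h1.trans ?_
        have h2 := mul_le_mul_of_nonneg_left (hb' j).1
          (by positivity : 0 ≤ K * (β / β'))
        refine le_trans (le_of_eq ?_) h2
        field_simp) i0
    rw [S.init] at this
    simpa using this
  refine S.pos_from ω (s := 1 + -(n:ℝ)) (by linarith) (fun j => ?_) i
  rw [Matrix.mulVec_sub, Matrix.mulVec_smul]
  simp only [Pi.sub_apply, Pi.smul_apply, smul_eq_mul, sub_nonneg]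
  refine le_trans ?_ (hb j).1
  have hε : z i0 / (K ^ 2 * (v i0 + 1)) ≤ β / β' / K := by
    rw [div_le_div_iff₀ (by positivity) (by positivity)]
    have h1 : 0 ≤ K * (β / β') := by positivity
    have h2 : z i0 ≤ K * (β / β') * (v i0 + 1) := by nlinarith
    have := mul_le_mul_of_nonneg_right h2 (by positivity : 0 ≤ K)
    refine this.trans (le_of_eq ?_)
    ring
  have h1 : κ (θ (-(n:ℝ)) ω) * (β' * e j) ≤ K * (β' * e j) :=
    mul_le_mul_of_nonneg_right hn (mul_nonneg hβ'.le (he j))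
  have h2 := (hb' j).2.trans h1
  have h3 := mul_le_mul hε h2 (hv _ j) (by positivity)
  refine h3.trans (le_of_eq ?_)
  field_simp

/-- Uniqueness of the normalized element of the cone. -/
def Un (U : Ω → ℝ → Matrix (Fin N) (Fin N) ℝ) (ω : Ω) : Prop :=
  ∀ v₁ v₂, Cn U ω v₁ → Cn U ω v₂ → enorm' v₁ = 1 → enorm' v₂ = 1 → v₁ = v₂

theorem un_of_rec (S : Sys θ A U) {e : Fin N → ℝ} (he : ∀ i, 0 ≤ e i) {κ : Ω → ℝ}
    (hκ1 : ∀ ω, 1 ≤ κ ω)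
    (hfocus : ∀ ω, ∀ u : Fin N → ℝ, (∀ i, 0 ≤ u i) → u ≠ 0 →
      ∃ β : ℝ, 0 < β ∧ ∀ i, β * e i ≤ (U ω 1).mulVec u i ∧
        (U ω 1).mulVec u i ≤ κ ω * (β * e i))
    {ω : Ω} {K : ℝ} (hrec : ∃ᶠ n : ℕ in atTop, κ (θ (-(n:ℝ)) ω) ≤ K) : Un U ω := by
  intro v₁ v₂ h₁ h₂ e₁ e₂
  set T : Set ℝ := {c | 0 ≤ c ∧ Cn U ω (v₁ - c • v₂)} with hT
  have hT0 : (0:ℝ) ∈ T := ⟨le_rfl, by simpa using h₁⟩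
  obtain ⟨i0, hi0⟩ := exists_pos_of_ne (h₂.nonneg S) (en_ne e₂)
  have hbdd : BddAbove T := by
    refine ⟨v₁ i0 / v₂ i0, fun c hc => ?_⟩
    have := hc.2.nonneg S i0
    rw [le_div_iff₀ hi0]
    simpa using this
  have hclosed : IsClosed T := by
    have : T = {c | 0 ≤ c} ∩ ⋂ r : ℝ, ⋂ i : Fin N,
        {c | 0 ≤ (U ω r *ᵥ v₁) i - c * (U ω r *ᵥ v₂) i} := by
      ext c
      simp [hT, Cn, Matrix.mulVec_sub, Matrix.mulVec_smul]
    rw [this]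
    refine (isClosed_le continuous_const continuous_id).inter
      (isClosed_iInter fun r => isClosed_iInter fun i => ?_)
    exact isClosed_le continuous_const (by fun_prop)
  have hm := hclosed.csSup_mem ⟨0, hT0⟩ hbdd
  set m := sSup T with hm'
  have hz : v₁ - m • v₂ = 0 := by
    by_contra hne
    obtain ⟨ε, hε, hcn⟩ := Cn.sub S he hκ1 hfocus hrec hm.2 h₂ hne (en_ne e₂)
    have : m + ε ∈ T := by
      refine ⟨by linarith [hm.1], ?_⟩
      rwa [add_smul, ← sub_sub]
    have := le_csSup hbdd this
    linarith
  have h3 : v₁ = m • v₂ := sub_eq_zero.1 hz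
  have h4 : m = 1 := by
    have := en_smul m v₂
    rw [← h3, e₁, e₂, abs_of_nonneg hm.1] at this
    linarith
  rw [h3, h4, one_smul]

/-- The pull-back approximations of the Floquet vector. -/
noncomputable def pullb (θ : ℝ → Ω → Ω) (U : Ω → ℝ → Matrix (Fin N) (Fin N) ℝ) (e : Fin N → ℝ)
    (n : ℕ) (ω : Ω) : Fin N → ℝ :=
  (enorm' (U (θ (-(n:ℝ)) ω) n *ᵥ e))⁻¹ • (U (θ (-(n:ℝ)) ω) n *ᵥ e)

theorem pullb_norm (S : Sys θ A U) {e : Fin N → ℝ} (hen : enorm' e = 1) (n : ℕ) (ω : Ω) :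
    enorm' (pullb θ U e n ω) = 1 := en_normalize (S.ne _ _ (en_ne hen))

theorem pullb_cluster (S : Sys θ A U) {e : Fin N → ℝ} (he : ∀ i, 0 ≤ e i) {ω : Ω} {v : Fin N → ℝ}
    (h : MapClusterPt v atTop (fun n => pullb θ U e n ω)) : Cn U ω v := by
  intro r i
  have hcl : IsClosed {v : Fin N → ℝ | 0 ≤ (U ω r *ᵥ v) i} := by
    refine isClosed_le continuous_const ?_
    exact (continuous_apply i).comp (Continuous.matrix_mulVec continuous_const continuous_id)
  have hev : ∀ᶠ n : ℕ in atTop, pullb θ U e n ω ∈ {v : Fin N → ℝ | 0 ≤ (U ω r *ᵥ v) i} := by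
    obtain ⟨n0, hn0⟩ := exists_nat_ge (-r)
    filter_upwards [eventually_ge_atTop n0] with n hn
    have hn' : (n0:ℝ) ≤ n := by exact_mod_cast hn
    refine S.pos_from ω (s := -(n:ℝ)) (by linarith) (fun j => ?_) i
    rw [pullb, Matrix.mulVec_smul]
    have := S.inv' ω (-(n:ℝ)) e
    rw [neg_neg] at this
    rw [this]
    exact mul_nonneg (inv_nonneg.2 (en_nonneg _)) (he j)
  exact hcl.mem_of_mapClusterPt h hev

theorem cn_exists (S : Sys θ A U) {e : Fin N → ℝ} (he : ∀ i, 0 ≤ e i) (hen : enorm' e = 1)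
    (ω : Ω) : ∃ v, Cn U ω v ∧ enorm' v = 1 := by
  obtain ⟨v, hv, hc⟩ := en_compact.exists_mapClusterPt (f := atTop)
    (u := fun n => pullb θ U e n ω) (tendsto_principal.2 (Eventually.of_forall fun n => pullb_norm S hen n ω))
  exact ⟨v, pullb_cluster S he hc, hv⟩

theorem pullb_tendsto (S : Sys θ A U) {e : Fin N → ℝ} (he : ∀ i, 0 ≤ e i) (hen : enorm' e = 1)
    {ω : Ω} (hU : Un U ω) {v : Fin N → ℝ} (hv : Cn U ω v) (hv1 : enorm' v = 1) :
    Tendsto (fun n => pullb θ U e n ω) atTop (nhds v) := by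
  refine en_compact.tendsto_nhds_of_unique_mapClusterPt
    (Eventually.of_forall fun n => pullb_norm S hen n ω) ?_
  intro y hy hc
  exact hU y v (pullb_cluster S he hc) hv hy hv1

theorem un_shift (S : Sys θ A U) {ω : Ω} (h : Un U ω) (r : ℝ) : Un U (θ r ω) := by
  have key : ∀ v, Cn U (θ r ω) v → enorm' v = 1 →
      Cn U ω ((enorm' (U (θ r ω) (-r) *ᵥ v))⁻¹ • (U (θ r ω) (-r) *ᵥ v)) := by
    intro v hv h1
    have := (hv.shift S (-r)).smul (inv_nonneg.2 (en_nonneg (U (θ r ω) (-r) *ᵥ v)))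
    rwa [S.flow_inv] at this
  intro v₁ v₂ h₁ h₂ e₁ e₂
  have n₁ := S.ne (θ r ω) (-r) (en_ne e₁)
  have n₂ := S.ne (θ r ω) (-r) (en_ne e₂)
  have hh := h _ _ (key v₁ h₁ e₁) (key v₂ h₂ e₂) (en_normalize n₁) (en_normalize n₂)
  have h3 := congrArg (fun x => U ω r *ᵥ x) hh
  simp only [Matrix.mulVec_smul, S.inv'] at h3
  have h4 := congrArg enorm' h3
  rw [en_smul, en_smul, e₁, e₂, mul_one, mul_one, abs_of_pos (inv_pos.2 (en_pos n₁)),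
    abs_of_pos (inv_pos.2 (en_pos n₂))] at h4
  rw [h4] at h3
  exact smul_right_injective _ (inv_pos.2 (en_pos n₂)).ne' h3

theorem w_equiv (S : Sys θ A U) {w : Ω → Fin N → ℝ} (hw1 : ∀ ω, enorm' (w ω) = 1)
    (hwc : ∀ ω, Un U ω → Cn U ω (w ω)) {ω : Ω} (h : Un U ω) (t : ℝ) :
    U ω t *ᵥ w ω = enorm' (U ω t *ᵥ w ω) • w (θ t ω) := by
  have hU := un_shift S h t
  have n₁ := S.ne ω t (en_ne (hw1 ω))
  have h1 := hU _ _ (((hwc ω h).shift S t).smul (inv_nonneg.2 (en_nonneg _))) (hwc _ hU)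
    (en_normalize n₁) (hw1 _)
  rw [← h1, smul_smul, mul_inv_cancel₀ (en_pos n₁).ne', one_smul]

theorem log_formula (S : Sys θ A U) {w : Ω → Fin N → ℝ} (hw1 : ∀ ω, enorm' (w ω) = 1)
    {ω : Ω} (h : ∀ t, U ω t *ᵥ w ω = enorm' (U ω t *ᵥ w ω) • w (θ t ω))
    (hf : ∀ a c, IntervalIntegrable
      (fun t => ∑ i, (A (θ t ω)).mulVec (w (θ t ω)) i * w (θ t ω) i) volume a c) (t : ℝ) :
    Real.log (enorm' (U ω t *ᵥ w ω)) =
      ∫ s in (0:ℝ)..t, ∑ i, (A (θ s ω)).mulVec (w (θ s ω)) i * w (θ s ω) i := by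
  set q : ℝ → ℝ := fun t => ∑ i, (A (θ t ω)).mulVec (w (θ t ω)) i * w (θ t ω) i with hq
  have hs := S.sol ω (w ω)
  have hy := Prim.sum Finset.univ (fun i => (hs i).mul (hs i))
  have hz := ((Prim.of_int hf).const_mul (-2)).exp.mul hy
  have hd : ∀ t, ∑ i, ((∑ j, A (θ t ω) i j * (U ω t *ᵥ w ω) j) * (U ω t *ᵥ w ω) i +
      (U ω t *ᵥ w ω) i * ∑ j, A (θ t ω) i j * (U ω t *ᵥ w ω) j) =
      2 * q t * ∑ i, (U ω t *ᵥ w ω) i * (U ω t *ᵥ w ω) i := by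
    intro t
    have e1 : ∑ i, (U ω t *ᵥ w ω) i * (U ω t *ᵥ w ω) i = enorm' (U ω t *ᵥ w ω) ^ 2 := by
      rw [en_sq]; exact Finset.sum_congr rfl fun i _ => by ring
    rw [e1]
    simp only [hq]
    rw [Finset.mul_sum, Finset.sum_mul]
    refine Finset.sum_congr rfl fun i _ => ?_
    have hc : ∀ j, (U ω t *ᵥ w ω) j = enorm' (U ω t *ᵥ w ω) * w (θ t ω) j := by
      intro j; exact congrFun (h t) j
    have e2 : ∑ j, A (θ t ω) i j * (U ω t *ᵥ w ω) j =
        enorm' (U ω t *ᵥ w ω) * (A (θ t ω)).mulVec (w (θ t ω)) i := by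
      simp only [Matrix.mulVec, dotProduct]
      rw [Finset.mul_sum]
      refine Finset.sum_congr rfl fun j _ => ?_
      have := hc j
      simp only [Matrix.mulVec, dotProduct] at this
      rw [this]; ring
    rw [e2, hc i]
    ring
  have h2 := hz.eq t
  have h3 : ∀ s, (-2 * q s * Real.exp (-2 * ∫ r in (0:ℝ)..s, q r) *
      ∑ i, (U ω s *ᵥ w ω) i * (U ω s *ᵥ w ω) i + Real.exp (-2 * ∫ r in (0:ℝ)..s, q r) *
      ∑ i, ((∑ j, A (θ s ω) i j * (U ω s *ᵥ w ω) j) * (U ω s *ᵥ w ω) i +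
      (U ω s *ᵥ w ω) i * ∑ j, A (θ s ω) i j * (U ω s *ᵥ w ω) j)) = 0 := by
    intro s; rw [hd s]; ring
  simp only [h3] at h2
  have e1 : ∀ t, ∑ i, (U ω t *ᵥ w ω) i * (U ω t *ᵥ w ω) i = enorm' (U ω t *ᵥ w ω) ^ 2 := by
    intro t
    rw [en_sq]; exact Finset.sum_congr rfl fun i _ => by ring
  simp only [e1] at h2
  simp only [S.init, hw1] at h2
  simp only [intervalIntegral.integral_same, mul_zero, Real.exp_zero, one_pow, mul_one,
    intervalIntegral.integral_zero, add_zero] at h2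
  have hp : 0 < enorm' (U ω t *ᵥ w ω) := en_pos (S.ne ω t (en_ne (hw1 ω)))
  have h4 := congrArg Real.log h2
  rw [Real.log_mul (Real.exp_pos _).ne' (pow_pos hp 2).ne', Real.log_exp, Real.log_pow,
    Real.log_one] at h4
  push_cast at h4
  linarith

theorem pic_meas [MeasurableSpace Ω] (hθjm : Measurable fun p : ℝ × Ω => θ p.1 p.2)
    (hAmeas : ∀ i j, Measurable fun ω => A ω i j) (v : Fin N → ℝ) (k : ℕ) :
    ∀ i, Measurable fun p : ℝ × Ω => pic (fun s => A (θ s p.2)) v k p.1 i := by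
  induction k with
  | zero => intro i; exact measurable_const
  | succ k ih =>
    intro i
    simp only [pic]
    refine measurable_const.add ?_
    have e : ∀ p : ℝ × Ω, ∫ s in (0:ℝ)..p.1, ∑ j, A (θ s p.2) i j *
        pic (fun s => A (θ s p.2)) v k s j =
        p.1 * ∫ r in Set.Ioc (0:ℝ) 1, ∑ j, A (θ (p.1 * r) p.2) i j *
          pic (fun s => A (θ s p.2)) v k (p.1 * r) j := by
      intro p
      have := intervalIntegral.smul_integral_comp_mul_left (a := 0) (b := 1)
        (fun s => ∑ j, A (θ s p.2) i j * pic (fun s => A (θ s p.2)) v k s j) p.1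
      rw [mul_zero, mul_one] at this
      rw [← this, intervalIntegral.integral_of_le zero_le_one, smul_eq_mul]
    simp only [e]
    refine measurable_fst.mul ?_
    have hm : Measurable fun x : (ℝ × Ω) × ℝ => ∑ j, A (θ (x.1.1 * x.2) x.1.2) i j *
          pic (fun s => A (θ s x.1.2)) v k (x.1.1 * x.2) j := by
      refine Finset.measurable_sum _ fun j _ => ?_
      have hmap : Measurable fun x : (ℝ × Ω) × ℝ => (x.1.1 * x.2, x.1.2) := by fun_prop
      exact ((hAmeas i j).comp (hθjm.comp hmap)).mul ((ih j).comp hmap)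
    exact (hm.stronglyMeasurable.integral_prod_right'
      (ν := volume.restrict (Set.Ioc (0:ℝ) 1))).measurable

theorem Sys.meas [MeasurableSpace Ω] (S : Sys θ A U)
    (hθjm : Measurable fun p : ℝ × Ω => θ p.1 p.2)
    (hAmeas : ∀ i j, Measurable fun ω => A ω i j) (v : Fin N → ℝ) {t : ℝ} (ht : 0 ≤ t) :
    Measurable fun ω => U ω t *ᵥ v := by
  rw [measurable_pi_iff]
  intro i
  refine measurable_of_tendsto_metrizable (f := fun k ω => pic (fun s => A (θ s ω)) v k t i)
    (fun k => (pic_meas hθjm hAmeas v k i).comp measurable_prodMk_left) ?_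
  rw [tendsto_pi_nhds]
  intro ω
  have := pic_tendsto (S.li ω) (S.sol ω v) ht i
  simpa only [S.init] using this

end

theorem sys_of {N : ℕ} {Ω : Type*} [MeasurableSpace Ω]
    (θ : ℝ → Ω → Ω) (hθ0 : θ 0 = id)
    (hθadd : ∀ s t : ℝ, θ (s + t) = θ s ∘ θ t)
    (hθjm : Measurable fun p : ℝ × Ω => θ p.1 p.2)
    (A : Ω → Matrix (Fin N) (Fin N) ℝ)
    (hAmeas : ∀ i j, Measurable fun ω => A ω i j)
    (hAloc : ∀ ω, ∀ a c : ℝ,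
      IntervalIntegrable (fun t => eopNorm (A (θ t ω))) volume a c)
    (U : Ω → ℝ → Matrix (Fin N) (Fin N) ℝ)
    (hUcont : ∀ ω (u0 : Fin N → ℝ), Continuous fun t : ℝ => (U ω t).mulVec u0)
    (hUeq : ∀ ω (u0 : Fin N → ℝ) (t : ℝ),
      (U ω t).mulVec u0 = u0 + ∫ s in (0:ℝ)..t, (A (θ s ω)).mulVec ((U ω s).mulVec u0))
    (hO1 : ∀ ω (i j : Fin N), i ≠ j → 0 ≤ A ω i j) : Sys θ A U := by
  have hli : ∀ ω, LI (fun t => A (θ t ω)) := by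
    intro ω i j a b
    refine (hAloc ω a b).mono_fun ?_ ?_
    · exact ((hAmeas i j).comp (hθjm.comp measurable_prodMk_right)).aestronglyMeasurable
    · filter_upwards with t
      rw [Real.norm_eq_abs, Real.norm_eq_abs]
      exact (entry_le_eop _ i j).trans (le_abs_self _)
  have hinit : ∀ ω v, U ω 0 *ᵥ v = v := by
    intro ω v
    rw [hUeq ω v 0]; simp
  refine ⟨hθ0, hθadd, hli, hinit, ?_, hO1⟩
  intro ω v i
  have hc : ∀ j, Continuous fun t => (U ω t *ᵥ v) j := fun j =>
    (continuous_apply j).comp (hUcont ω v)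
  have hint : ∀ j a b, IntervalIntegrable
      (fun t => ∑ k, A (θ t ω) j k * (U ω t *ᵥ v) k) volume a b :=
    fun j a b => (hli ω).row hc j a b
  refine ⟨fun a b => hint i a b, fun t => ?_⟩
  have hI : IntervalIntegrable (fun s => (A (θ s ω)).mulVec ((U ω s).mulVec v)) volume 0 t := by
    constructor
    · exact Integrable.of_eval fun j => (hint j 0 t).1
    · exact Integrable.of_eval fun j => (hint j 0 t).2
  have h1 := congrFun (hUeq ω v t) i
  have h2 := ContinuousLinearMap.intervalIntegral_comp_comm
    (ContinuousLinearMap.proj (R := ℝ) (φ := fun _ : Fin N => ℝ) i) hI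
  show (U ω t *ᵥ v) i = (U ω 0 *ᵥ v) i +
    ∫ s in (0:ℝ)..t, ∑ j, A (θ s ω) i j * (U ω s *ᵥ v) j
  rw [hinit, h1, Pi.add_apply]
  congr 1
  exact h2.symm

theorem rec_ae {Ω : Type*} [MeasurableSpace Ω] (ℙ : Measure Ω) [IsProbabilityMeasure ℙ]
    (θ : ℝ → Ω → Ω) (hθ0 : θ 0 = id)
    (hθadd : ∀ s t : ℝ, θ (s + t) = θ s ∘ θ t)
    (hθmp : ∀ t, MeasurePreserving (θ t) ℙ ℙ) (κ : Ω → ℝ) (hκmeas : Measurable κ) :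
    ∀ᵐ ω ∂ℙ, ∃ K : ℝ, ∃ᶠ n : ℕ in atTop, κ (θ (-(n:ℝ)) ω) ≤ K := by
  have hc := (hθmp (-1)).conservative
  have h : ∀ᵐ ω ∂ℙ, ∀ m : ℕ, κ ω ≤ m → ∃ᶠ n : ℕ in atTop, (θ (-1))^[n] ω ∈ {ω | κ ω ≤ m} := by
    rw [ae_all_iff]
    intro m
    have hs : MeasurableSet {ω | κ ω ≤ (m:ℝ)} := measurableSet_le hκmeas measurable_const
    exact hc.ae_mem_imp_frequently_image_mem hs.nullMeasurableSet
  filter_upwards [h] with ω hω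
  obtain ⟨m, hm⟩ := exists_nat_ge (κ ω)
  refine ⟨m, (hω m hm).mono fun n hn => ?_⟩
  rw [flow_iter hθ0 hθadd, mul_neg_one] at hn
  exact hn

section
variable {N : ℕ} {Ω : Type*} {θ : ℝ → Ω → Ω} {A : Ω → Matrix (Fin N) (Fin N) ℝ}
  {U : Ω → ℝ → Matrix (Fin N) (Fin N) ℝ}

theorem exists_w [MeasurableSpace Ω] (ℙ : Measure Ω) [ℙ.IsComplete] (S : Sys θ A U)
    (hθjm : Measurable fun p : ℝ × Ω => θ p.1 p.2)
    (hAmeas : ∀ i j, Measurable fun ω => A ω i j)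
    (hUn : ∀ᵐ ω ∂ℙ, Un U ω)
    {e : Fin N → ℝ} (he : ∀ i, 0 ≤ e i) (hen : enorm' e = 1) :
    ∃ w : Ω → Fin N → ℝ, Measurable w ∧ (∀ ω, Cn U ω (w ω)) ∧ ∀ ω, enorm' (w ω) = 1 := by
  choose w hw using cn_exists S he hen
  refine ⟨w, ?_, fun ω => (hw ω).1, fun ω => (hw ω).2⟩
  have hae : AEMeasurable w ℙ := by
    refine aemeasurable_of_tendsto_metrizable_ae atTop (f := fun n : ℕ => pullb θ U e n) ?_ ?_
    · intro n
      have h1 : Measurable fun ω => U (θ (-(n:ℝ)) ω) n *ᵥ e :=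
        (S.meas hθjm hAmeas e (Nat.cast_nonneg n)).comp (hθjm.comp measurable_prodMk_left)
      have h2 : Measurable (pullb θ U e n) :=
        ((en_cont.measurable.comp h1).inv).smul h1
      exact h2.aemeasurable
    · filter_upwards [hUn] with ω h
      exact pullb_tendsto S he hen h (hw ω).1 (hw ω).2
  exact aemeasurable_iff_measurable.1 hae

theorem f_le_sup {M : Matrix (Fin N) (Fin N) ℝ} {v : Fin N → ℝ} (hv : ∀ i, 0 ≤ v i)
    (h1 : enorm' v = 1) :
    ∑ i, M.mulVec v i * v i ≤ N * (N * |⨆ i, ⨆ j, M i j|) := by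
  have hvb : ∀ i, v i ≤ 1 := fun i => (le_abs_self _).trans ((en_abs_le v i).trans h1.le)
  have hM : ∀ i j, M i j ≤ |⨆ i, ⨆ j, M i j| := by
    intro i j
    refine le_trans ?_ (le_abs_self _)
    exact (le_ciSup (f := fun j => M i j) (Set.finite_range _).bddAbove j).trans
      (le_ciSup (f := fun i => ⨆ j, M i j) (Set.finite_range _).bddAbove i)
  have hr : ∀ i, M.mulVec v i * v i ≤ N * |⨆ i, ⨆ j, M i j| := by
    intro i
    have : M.mulVec v i * v i = ∑ j, M i j * (v j * v i) := by
      simp only [Matrix.mulVec, dotProduct]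
      rw [Finset.sum_mul]
      exact Finset.sum_congr rfl fun j _ => by ring
    rw [this]
    have h3 : ∀ j ∈ Finset.univ, M i j * (v j * v i) ≤ |⨆ i, ⨆ j, M i j| := by
      intro j _
      refine (mul_le_mul_of_nonneg_right (hM i j) (mul_nonneg (hv j) (hv i))).trans ?_
      refine mul_le_of_le_one_right (abs_nonneg _) ?_
      exact mul_le_one₀ (hvb j) (hv i) (hvb i)
    refine (Finset.sum_le_sum h3).trans (le_of_eq ?_)
    simp
  refine (Finset.sum_le_sum fun i _ => hr i).trans (le_of_eq ?_)
  simp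

theorem f_li [MeasurableSpace Ω] (S : Sys θ A U)
    (hθjm : Measurable fun p : ℝ × Ω => θ p.1 p.2)
    {w : Ω → Fin N → ℝ} (hw1 : ∀ ω, enorm' (w ω) = 1)
    (hfm : Measurable fun ω => ∑ i, (A ω).mulVec (w ω) i * w ω i) (ω : Ω) (a c : ℝ) :
    IntervalIntegrable
      (fun t => ∑ i, (A (θ t ω)).mulVec (w (θ t ω)) i * w (θ t ω) i) volume a c := by
  refine ((S.li ω).tot a c).mono_fun ?_ ?_
  · exact (hfm.comp (hθjm.comp measurable_prodMk_right)).aestronglyMeasurable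
  · filter_upwards with t
    rw [Real.norm_eq_abs, Real.norm_eq_abs]
    refine le_trans ?_ (le_abs_self _)
    have := bilin_le (A (θ t ω)) (w (θ t ω))
    rw [← en_sq, hw1, one_pow, mul_one] at this
    exact this

/-- domination of arbitrary solutions by the principal one -/
theorem dom (S : Sys θ A U) {e : Fin N → ℝ} {κ : Ω → ℝ}
    (hκ1 : ∀ ω, 1 ≤ κ ω)
    (hfocus : ∀ ω, ∀ u : Fin N → ℝ, (∀ i, 0 ≤ u i) → u ≠ 0 →
      ∃ β : ℝ, 0 < β ∧ ∀ i, β * e i ≤ (U ω 1).mulVec u i ∧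
        (U ω 1).mulVec u i ≤ κ ω * (β * e i))
    {ω : Ω} {v : Fin N → ℝ} (hv : ∀ i, 0 ≤ v i) (hv0 : v ≠ 0) {u : Fin N → ℝ} (hu : u ≠ 0) :
    ∃ c : ℝ, 0 < c ∧ ∀ t, 1 ≤ t → enorm' (U ω t *ᵥ u) ≤ c * enorm' (U ω t *ᵥ v) := by
  set p : Fin N → ℝ := fun i => |u i| with hp
  have hp0 : p ≠ 0 := by
    obtain ⟨i, hi⟩ := Function.ne_iff.1 hu
    exact Function.ne_iff.2 ⟨i, abs_ne_zero.2 hi⟩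
  obtain ⟨β, hβ, hb⟩ := hfocus ω p (fun i => abs_nonneg _) hp0
  obtain ⟨β', hβ', hb'⟩ := hfocus ω v hv hv0
  have hκ : 0 < κ ω := one_pos.trans_le (hκ1 ω)
  set c := κ ω * (β / β') with hc
  have hc0 : 0 < c := by positivity
  refine ⟨c, hc0, fun t ht => ?_⟩
  have h1 : ∀ i, 0 ≤ (U ω t *ᵥ (c • v - p)) i := by
    refine S.pos_from ω ht fun j => ?_
    rw [Matrix.mulVec_sub, Matrix.mulVec_smul]
    simp only [Pi.sub_apply, Pi.smul_apply, smul_eq_mul, sub_nonneg]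
    refine (hb j).2.trans ?_
    refine le_trans (le_of_eq ?_) (mul_le_mul_of_nonneg_left (hb' j).1 hc0.le)
    rw [hc]; field_simp
  have h2 : ∀ i, 0 ≤ (U ω t *ᵥ (p - u)) i := S.pos ω (by linarith) fun i =>
    sub_nonneg.2 (le_abs_self _)
  have h3 : ∀ i, 0 ≤ (U ω t *ᵥ (p + u)) i := S.pos ω (by linarith) fun i => by
    have := neg_abs_le (u i)
    simp only [Pi.add_apply, hp]; linarith
  have h4 : c * enorm' (U ω t *ᵥ v) = enorm' (c • (U ω t *ᵥ v)) := by
    rw [en_smul, abs_of_pos hc0]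
  rw [h4]
  apply en_mono
  intro i
  have e1 := h1 i
  have e2 := h2 i
  have e3 := h3 i
  rw [Matrix.mulVec_sub, Matrix.mulVec_smul] at e1
  rw [Matrix.mulVec_sub] at e2
  rw [Matrix.mulVec_add] at e3
  simp only [Pi.sub_apply, Pi.add_apply, Pi.smul_apply, smul_eq_mul] at e1 e2 e3 ⊢
  rw [abs_le]
  constructor <;> linarith

end

/-- Upper growth bound in `EReal` -/
theorem lim_int {θ₀ : ℝ → ℝ} {a : ℝ} (h1 : ∀ b > a, ∀ᶠ t : ℝ in atTop, θ₀ t ≤ b * t)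
    (h2 : ∀ b > -a, ∀ᶠ t : ℝ in atTop, -θ₀ t ≤ b * t) :
    Tendsto (fun t : ℝ => (((t:ℝ) : EReal)⁻¹ * ((θ₀ t : ℝ) : EReal))) atTop (nhds ((a:ℝ):EReal)) := by
  have h : Tendsto (fun t : ℝ => t⁻¹ * θ₀ t) atTop (nhds a) := by
    rw [tendsto_order]
    constructor
    · intro b hb
      obtain ⟨b', h3, h4⟩ := exists_between hb
      filter_upwards [h2 (-b') (by linarith), eventually_gt_atTop 0] with t ht h0
      refine h3.trans_le ?_
      rw [inv_mul_eq_div, le_div_iff₀ h0]; linarith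
    · intro b hb
      obtain ⟨b', h3, h4⟩ := exists_between hb
      filter_upwards [h1 b' h3, eventually_gt_atTop 0] with t ht h0
      refine lt_of_le_of_lt ?_ h4
      rw [inv_mul_eq_div, div_le_iff₀ h0]; linarith
  have := (continuous_coe_real_ereal.tendsto a).comp h
  refine this.congr fun t => ?_
  simp [EReal.coe_mul, EReal.coe_inv]

theorem lim_bot {θ₀ : ℝ → ℝ} (h1 : ∀ b, ∀ᶠ t : ℝ in atTop, θ₀ t ≤ b * t) :
    Tendsto (fun t : ℝ => (((t:ℝ) : EReal)⁻¹ * ((θ₀ t : ℝ) : EReal))) atTop (nhds ⊥) := by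
  rw [EReal.tendsto_nhds_bot_iff_real]
  intro x
  filter_upwards [h1 (x-1), eventually_gt_atTop 0] with t ht h0
  rw [← EReal.coe_inv, ← EReal.coe_mul, EReal.coe_lt_coe_iff]
  have : t⁻¹ * θ₀ t ≤ x - 1 := by
    rw [inv_mul_eq_div, div_le_iff₀ h0]; linarith
  linarith

theorem limsup_le_of {θ₀ g : ℝ → ℝ} {lam : EReal} {c : ℝ}
    (h : Tendsto (fun t : ℝ => (((t:ℝ) : EReal)⁻¹ * ((θ₀ t : ℝ) : EReal))) atTop (nhds lam))
    (hg : ∀ t, 1 ≤ t → g t ≤ c + θ₀ t) :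
    limsup (fun t : ℝ => (((t:ℝ) : EReal)⁻¹ * ((g t : ℝ) : EReal))) atTop ≤ lam := by
  have h0 : Tendsto (fun t : ℝ => ((t⁻¹ * c : ℝ) : EReal)) atTop (nhds ((0:ℝ):EReal)) := by
    refine (continuous_coe_real_ereal.tendsto 0).comp ?_
    simpa using tendsto_inv_atTop_zero.mul_const c
  have h2 : Tendsto (fun t : ℝ => ((t⁻¹ * c : ℝ) : EReal) +
      (((t:ℝ) : EReal)⁻¹ * ((θ₀ t : ℝ) : EReal))) atTop (nhds (((0:ℝ):EReal) + lam)) := by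
    have hc := EReal.continuousAt_add (p := (((0:ℝ):EReal), lam)) (by simp) (by simp)
    exact hc.tendsto.comp (h0.prodMk_nhds h)
  rw [EReal.coe_zero, zero_add] at h2
  rw [← h2.limsup_eq]
  refine limsup_le_limsup ?_
  filter_upwards [eventually_ge_atTop 1] with t ht
  rw [← EReal.coe_inv, ← EReal.coe_mul, ← EReal.coe_mul, ← EReal.coe_add, EReal.coe_le_coe_iff,
    ← mul_add]
  exact mul_le_mul_of_nonneg_left (hg t ht) (inv_nonneg.2 (by linarith))

/-- Generalized principal Floquet subspaces and generalized principal
Lyapunov exponent for a random cooperative linear ODE system satisfying the focusing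
conditions; the exponent equals `∫ ⟨A(ω)w(ω), w(ω)⟩ dℙ(ω) ∈ [−∞, ∞)`. -/
theorem stmt_16 {N : ℕ} (hN : 2 ≤ N)
    {Ω : Type*} [MeasurableSpace Ω] (ℙ : Measure Ω) [IsProbabilityMeasure ℙ]
    [ℙ.IsComplete]
    (θ : ℝ → Ω → Ω) (hθ0 : θ 0 = id)
    (hθadd : ∀ s t : ℝ, θ (s + t) = θ s ∘ θ t)
    (hθjm : Measurable fun p : ℝ × Ω => θ p.1 p.2)
    (hθmp : ∀ t, MeasurePreserving (θ t) ℙ ℙ)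
    (hθerg : ∀ F : Set Ω, MeasurableSet F → (∀ t, θ t ⁻¹' F = F) →
      ℙ F = 0 ∨ ℙ F = 1)
    (A : Ω → Matrix (Fin N) (Fin N) ℝ)
    (hAmeas : ∀ i j, Measurable fun ω => A ω i j)
    (hAloc : ∀ ω, ∀ a c : ℝ,
      IntervalIntegrable (fun t => eopNorm (A (θ t ω))) volume a c)
    (U : Ω → ℝ → Matrix (Fin N) (Fin N) ℝ)
    (hUcont : ∀ ω (u0 : Fin N → ℝ), Continuous fun t : ℝ => (U ω t).mulVec u0)
    (hUeq : ∀ ω (u0 : Fin N → ℝ) (t : ℝ),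
      (U ω t).mulVec u0 = u0 + ∫ s in (0:ℝ)..t, (A (θ s ω)).mulVec ((U ω s).mulVec u0))
    -- (O1) cooperativity
    (hO1 : ∀ ω (i j : Fin N), i ≠ j → 0 ≤ A ω i j)
    -- (O2) integrability
    (hO2 : Integrable (fun ω => ⨆ i, ⨆ j, A ω i j) ℙ)
    -- focusing conditions (B3) and (B3)*
    (e estar : Fin N → ℝ) (he : ∀ i, 0 ≤ e i) (hestar : ∀ i, 0 ≤ estar i)
    (hen : enorm' e = 1) (hestarn : enorm' estar = 1)
    (κ κstar : Ω → ℝ) (hκmeas : Measurable κ) (hκstarmeas : Measurable κstar)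
    (hκ1 : ∀ ω, 1 ≤ κ ω) (hκstar1 : ∀ ω, 1 ≤ κstar ω)
    (hκint : Integrable (fun ω => lnplus (Real.log (κ ω))) ℙ)
    (hκstarint : Integrable (fun ω => lnplus (Real.log (κstar ω))) ℙ)
    (hfocus : ∀ ω, ∀ u : Fin N → ℝ, (∀ i, 0 ≤ u i) → u ≠ 0 →
      ∃ β : ℝ, 0 < β ∧ ∀ i, β * e i ≤ (U ω 1).mulVec u i ∧
        (U ω 1).mulVec u i ≤ κ ω * (β * e i))
    (hfocusstar : ∀ ω, ∀ u : Fin N → ℝ, (∀ i, 0 ≤ u i) → u ≠ 0 →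
      ∃ βstar : ℝ, 0 < βstar ∧
        ∀ i, βstar * estar i ≤ (U (θ (-1) ω) 1).transpose.mulVec u i ∧
          (U (θ (-1) ω) 1).transpose.mulVec u i ≤ κstar ω * (βstar * estar i)) :
    ∃ Ω1 : Set Ω, MeasurableSet Ω1 ∧ (∀ t ω, ω ∈ Ω1 ↔ θ t ω ∈ Ω1) ∧ ℙ Ω1 = 1 ∧
      ∃ w : Ω → Fin N → ℝ, Measurable w ∧
        (∀ ω ∈ Ω1, (∀ i, 0 ≤ w ω i) ∧ w ω ≠ 0 ∧ enorm' (w ω) = 1) ∧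
        -- (i)
        (∀ ω ∈ Ω1, ∀ t : ℝ, 0 ≤ t →
          (U ω t).mulVec (w ω) = enorm' ((U ω t).mulVec (w ω)) • w (θ t ω)) ∧
        ∃ lam : EReal, lam ≠ ⊤ ∧
          -- (ii): λ̃₁ = ∫ ⟨A(ω)w(ω), w(ω)⟩ dℙ(ω) ∈ [−∞, ∞)
          ((Integrable (fun ω => ∑ i, (A ω).mulVec (w ω) i * w ω i) ℙ →
            lam = ((∫ ω, (∑ i, (A ω).mulVec (w ω) i * w ω i) ∂ℙ : ℝ) : EReal)) ∧
           (¬ Integrable (fun ω => ∑ i, (A ω).mulVec (w ω) i * w ω i) ℙ →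
            lam = ⊥)) ∧
          (∀ ω ∈ Ω1, Tendsto (fun t : ℝ =>
              ((t⁻¹ * Real.log (enorm' ((U ω t).mulVec (w ω)))) : EReal))
            atTop (nhds lam)) ∧
          -- (iii)
          (∀ ω ∈ Ω1, ∀ u : Fin N → ℝ, u ≠ 0 →
            limsup (fun t : ℝ =>
              ((t⁻¹ * Real.log (enorm' ((U ω t).mulVec u))) : EReal)) atTop ≤ lam) := by
  classical
  have S : Sys θ A U := sys_of θ hθ0 hθadd hθjm A hAmeas hAloc U hUcont hUeq hO1
  have hUn : ∀ᵐ ω ∂ℙ, Un U ω := by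
    filter_upwards [rec_ae ℙ θ hθ0 hθadd hθmp κ hκmeas] with ω ⟨K, hK⟩
    exact un_of_rec S he hκ1 hfocus hK
  obtain ⟨w, hwm, hwc, hw1⟩ := exists_w ℙ S hθjm hAmeas hUn he hen
  have hwn : ∀ ω i, 0 ≤ w ω i := fun ω i => (hwc ω).nonneg S i
  set f : Ω → ℝ := fun ω => ∑ i, (A ω).mulVec (w ω) i * w ω i with hfdef
  have hfm : Measurable f := by
    refine Finset.measurable_sum _ fun i _ => Measurable.mul ?_ ((measurable_pi_apply i).comp hwm)
    show Measurable fun ω => ∑ j, A ω i j * w ω j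
    refine Finset.measurable_sum _ fun j _ => ?_
    exact (hAmeas i j).mul ((measurable_pi_apply j).comp hwm)
  have hfl : ∀ ω a c, IntervalIntegrable (fun t => f (θ t ω)) volume a c :=
    fun ω a c => f_li S hθjm hw1 hfm ω a c
  have hfln : ∀ ω a c, IntervalIntegrable (fun t => (-f) (θ t ω)) volume a c :=
    fun ω a c => (hfl ω a c).neg
  have hfp : Integrable (fun ω => max (f ω) 0) ℙ := by
    refine Integrable.mono' ((hO2.abs.const_mul (N:ℝ)).const_mul (N:ℝ))
      (hfm.max measurable_const).aestronglyMeasurable (Eventually.of_forall fun ω => ?_)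
    rw [Real.norm_eq_abs, abs_of_nonneg (le_max_right _ _)]
    exact max_le (f_le_sup (hwn ω) (hw1 ω)) (by positivity)
  have heq : ∀ ω, Un U ω → ∀ t, U ω t *ᵥ w ω = enorm' (U ω t *ᵥ w ω) • w (θ t ω) :=
    fun ω h t => w_equiv S hw1 (fun ω _ => hwc ω) h t
  have hlog : ∀ ω, Un U ω → ∀ t, Real.log (enorm' (U ω t *ᵥ w ω)) =
      ∫ s in (0:ℝ)..t, f (θ s ω) :=
    fun ω h t => log_formula S hw1 (heq ω h) (hfl ω) t
  -- reduction to finding a suitable invariant property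
  suffices hmain : ∃ (lam : EReal) (P : Ω → Prop), lam ≠ ⊤ ∧
      ((Integrable f ℙ → lam = ((∫ ω, f ω ∂ℙ : ℝ) : EReal)) ∧ (¬ Integrable f ℙ → lam = ⊥)) ∧
      (∀ᵐ ω ∂ℙ, P ω) ∧ (∀ t ω, P ω → P (θ t ω)) ∧
      ∀ ω, P ω → Tendsto (fun t : ℝ => (((t:ℝ) : EReal)⁻¹ *
        ((∫ s in (0:ℝ)..t, f (θ s ω) : ℝ) : EReal))) atTop (nhds lam) by
    obtain ⟨lam, P, hlt, hlam, hPae, hPinv, hPlim⟩ := hmain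
    have hae : ∀ᵐ ω ∂ℙ, ω ∈ {ω | Un U ω ∧ P ω} := by
      filter_upwards [hUn, hPae] with ω h1 h2 using ⟨h1, h2⟩
    have hnull : ℙ {ω | Un U ω ∧ P ω}ᶜ = 0 := hae
    have hms : MeasurableSet {ω | Un U ω ∧ P ω} :=
      (Measure.IsComplete.out' _ hnull).of_compl
    have hfwd : ∀ t ω, ω ∈ {ω | Un U ω ∧ P ω} → θ t ω ∈ {ω | Un U ω ∧ P ω} :=
      fun t ω h => ⟨un_shift S h.1 t, hPinv t ω h.2⟩
    have hlim : ∀ ω ∈ {ω | Un U ω ∧ P ω}, Tendsto (fun t : ℝ =>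
        ((t:EReal)⁻¹ * ((Real.log (enorm' ((U ω t).mulVec (w ω))) : ℝ) : EReal)))
        atTop (nhds lam) := by
      intro ω hω
      simp only [hlog ω hω.1]
      exact hPlim ω hω.2
    refine ⟨{ω | Un U ω ∧ P ω}, hms, fun t ω => ⟨hfwd t ω, fun h => ?_⟩,
      (prob_compl_eq_zero_iff hms).1 hnull, w, hwm,
      fun ω _ => ⟨hwn ω, en_ne (hw1 ω), hw1 ω⟩, fun ω hω t _ => heq ω hω.1 t, lam, hlt, hlam,
      hlim, ?_⟩
    · have := hfwd (-t) _ h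
      rwa [S.flow_inv] at this
    · intro ω hω u hu
      obtain ⟨c, hc, hd⟩ := dom S hκ1 hfocus (ω := ω) (hwn ω) (en_ne (hw1 ω)) hu
      refine limsup_le_of (c := Real.log c) (hlim ω hω) fun t ht => ?_
      have p1 := en_pos (S.ne ω t hu)
      have p2 := en_pos (S.ne ω t (en_ne (hw1 ω)))
      rw [← Real.log_mul hc.ne' p2.ne']
      exact Real.log_le_log p1 (hd t ht)
  by_cases hi : Integrable f ℙ
  · refine ⟨((∫ ω, f ω ∂ℙ : ℝ) : EReal),
      fun ω => Good θ f (∫ ω, f ω ∂ℙ) ω ∧ Good θ (-f) (-∫ ω, f ω ∂ℙ) ω,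
      EReal.coe_ne_top _, ⟨fun _ => rfl, fun h => absurd hi h⟩, ?_, ?_, ?_⟩
    · have h2 := birk2 ℙ θ hθ0 hθadd hθjm hθmp hθerg (-f) hfm.neg hfln hi.neg
      have e1 : ∫ ω, (-f) ω ∂ℙ = -∫ ω, f ω ∂ℙ := integral_neg f
      rw [e1] at h2
      filter_upwards [birk2 ℙ θ hθ0 hθadd hθjm hθmp hθerg f hfm hfl hi, h2] with ω h1 h2
        using ⟨h1, h2⟩
    · intro t ω h
      exact ⟨h.1.shift hθadd (hfl ω) t, h.2.shift hθadd (hfln ω) t⟩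
    · intro ω h
      refine lim_int h.1 fun b hb => ?_
      have := h.2 b hb
      simpa only [Pi.neg_apply, intervalIntegral.integral_neg] using this
  · refine ⟨⊥, fun ω => ∀ a, Good θ f a ω, bot_ne_top,
      ⟨fun h => absurd h hi, fun _ => rfl⟩,
      birk3 ℙ θ hθ0 hθadd hθjm hθmp hθerg f hfm hfl hfp hi, ?_, ?_⟩
    · intro t ω h a
      exact (h a).shift hθadd (hfl ω) t
    · intro ω h
      exact lim_bot fun b => h (b-1) b (by linarith)
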